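/- arXiv:1712.03247 — 2 statements merged into one kernel-verified Lean document; each statement's English description precedes it below -/
import Mathlib

section
/- Let k ≥ 3 be a fixed integer and let c ≥ 1 be a fixed integer. For each n, let p = sqrt(log n / n) and consider the random graph G = G(k, cn, p). For every ε > 0, the probability that for every vertex v of G the number X_v of proper k-cycles of G containing v satisfies (1-ε)·(cn)^{k-1}·p^k ≤ X_v ≤ (1+ε)·(cn)^{k-1}·p^k tends to 1 as n → ∞. -/
open Finset MeasureTheory
open scoped Classical ENNReal

/-- The Bernoulli measure on `Bool` with success probability `p` (for `p ∈ [0,1]`). -/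
noncomputable def bernoulliM (p : ℝ) : Measure Bool :=
  (ENNReal.ofReal p) • Measure.dirac true + (ENNReal.ofReal (1 - p)) • Measure.dirac false

/-- The law of the random graph `G(k, N, p)`: the sample space is one Boolean (presence of
an edge) for each triple `(i, a, b)`, representing the potential edge between vertex `a` of
part `i` and vertex `b` of part `i+1 (mod k)`; edges appear independently with probability
`p`. -/
noncomputable def edgeMeasure (k N : ℕ) (p : ℝ) : Measure (Fin k × Fin N × Fin N → Bool) :=
  Measure.pi (fun _ => bernoulliM p)

/-- The random graph `G(k, N, p)` determined by the sample point `ω`: its vertex set is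
`Fin k × Fin N` (part `i` is `{i} × Fin N`), and `(i, a)` is joined to `(i+1 mod k, b)`
exactly when `ω (i, a, b) = true`. -/
def randGraph (k N : ℕ) (ω : Fin k × Fin N × Fin N → Bool) : SimpleGraph (Fin k × Fin N) :=
  SimpleGraph.fromRel (fun u v => ((u.1 : ℕ) + 1) % k = (v.1 : ℕ) ∧ ω (u.1, u.2, v.2) = true)

/-- The part map of the random graph `G(k, N, p)`: vertex `(i, a)` lies in part `i`. -/
def randPart (k N : ℕ) (v : Fin k × Fin N) : ℕ := (v.1 : ℕ)

/-- `G` is `C_k`-colorable with partition given by the part map `P` (part `i` is `P ⁻¹ i`,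
`i < k`): every edge joins part `i` and part `i+1 (mod k)` for some `i`. -/
def CkColorable {V : Type*} (k : ℕ) (G : SimpleGraph V) (P : V → ℕ) : Prop :=
  (∀ v, P v < k) ∧ ∀ u v, G.Adj u v → (P v = (P u + 1) % k ∨ P u = (P v + 1) % k)

/-- `S` is the vertex set of a proper `k`-cycle of `G`: a cycle `v_1 v_2 ⋯ v_k`
with `v_i` in part `i` for each `i`. -/
def IsProperCycle {V : Type*} (k : ℕ) (G : SimpleGraph V) (P : V → ℕ) (S : Finset V) : Prop :=
  ∃ w : ℕ → V, S = (Finset.range k).image w ∧ (∀ i < k, P (w i) = i) ∧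
    ∀ i < k, G.Adj (w i) (w ((i + 1) % k))

/-- `S` is the vertex set of a proper `(k-1)`-path of `G`: a path on `k-1` distinct vertices
meeting each part in at most one vertex. -/
def IsProperPath {V : Type*} (k : ℕ) (G : SimpleGraph V) (P : V → ℕ) (S : Finset V) : Prop :=
  ∃ w : ℕ → V, S = (Finset.range (k - 1)).image w ∧
    (∀ i < k - 1, ∀ j < k - 1, i ≠ j → w i ≠ w j) ∧
    (∀ i, i + 1 < k - 1 → G.Adj (w i) (w (i + 1))) ∧
    (∀ i < k - 1, ∀ j < k - 1, i ≠ j → P (w i) ≠ P (w j))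

/-- The finset of (vertex sets of) proper `k`-cycles of `G`. -/
noncomputable def properCycles {V : Type*} [Fintype V] (k : ℕ) (G : SimpleGraph V)
    (P : V → ℕ) : Finset (Finset V) :=
  Finset.univ.filter (fun S => IsProperCycle k G P S)

/-- `t_k`: the total number of proper `k`-cycles of `G`. -/
noncomputable def tkCount {V : Type*} [Fintype V] (k : ℕ) (G : SimpleGraph V) (P : V → ℕ) : ℕ :=
  (properCycles k G P).card

/-- `t_𝓑`: the number of proper `k`-cycles of `G` extending some `B ∈ 𝓑`. -/
noncomputable def tBCount {V : Type*} [Fintype V] (k : ℕ) (G : SimpleGraph V) (P : V → ℕ)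
    (𝓑 : Finset (Finset V)) : ℕ :=
  ((properCycles k G P).filter (fun S => ∃ B ∈ 𝓑, B ⊆ S)).card

/-- `y_{A,𝓑}`: the number of proper `k`-cycles of `G` that extend some `B ∈ 𝓑` with a
vertex belonging to `A ∪ ⋃_{B ∈ 𝓑} V(B)`. -/
noncomputable def yCount {V : Type*} [Fintype V] [DecidableEq V] (k : ℕ) (G : SimpleGraph V)
    (P : V → ℕ) (A : Finset V) (𝓑 : Finset (Finset V)) : ℕ :=
  ((properCycles k G P).filter
    (fun S => ∃ B ∈ 𝓑, B ⊆ S ∧ ∃ u ∈ S \ B, u ∈ A ∪ 𝓑.biUnion id)).card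

/-- `z_C`: the number of proper `k`-cycles of `G` intersecting `C`. -/
noncomputable def zCount {V : Type*} [Fintype V] (k : ℕ) (G : SimpleGraph V) (P : V → ℕ)
    (C : Finset V) : ℕ :=
  ((properCycles k G P).filter (fun S => ∃ u ∈ S, u ∈ C)).card

/-- `𝓑` is a family of `n` pairwise vertex-disjoint proper `(k-1)`-paths of `G`. -/
def IsGoodFamily {V : Type*} (k : ℕ) (G : SimpleGraph V) (P : V → ℕ) (n : ℕ)
    (𝓑 : Finset (Finset V)) : Prop :=
  𝓑.card = n ∧ (∀ B ∈ 𝓑, IsProperPath k G P B) ∧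
    ∀ B ∈ 𝓑, ∀ B' ∈ 𝓑, B ≠ B' → Disjoint B B'

/-- `X_v`: the number of proper `k`-cycles of `G` containing the vertex `v`. -/
noncomputable def XvCount {V : Type*} [Fintype V] (k : ℕ) (G : SimpleGraph V) (P : V → ℕ)
    (v : V) : ℕ :=
  ((properCycles k G P).filter (fun S => v ∈ S)).card

/-!
Fix a vertex `v` in part `i` and let `x_j` be the vector counting walks of length `j` from `v`
through the parts `i, i+1, …, i+j`. With `m = k - 1`, closing up the walks gives
`X_v = ∑_w x_m(w) · 1[w ~ v]` (`XvCount_eq`), and the vector `x_m` does not depend on the edges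
between the last part and part `i`. So, conditionally on all other edges, `X_v` is a weighted sum
of independent Bernoulli variables, with mean `p · ∑_w x_m(w)`.

The total weight is controlled by degrees. The vertex degrees into the next part are
`(1 ± δ) p N`, so `∑_w x_j(w)` lies between `((1 - δ) p N)^j` and `((1 + δ) p N)^j`
(`le_sum_walkWeight`, `sum_walkWeight_le`). The largest single weight is controlled by codegrees:
if all codegrees are at most `η p N`, then `x_m(w) ≤ η p N · ∑_u x_{m-2}(u)`
(`walkWeight_add_two_le`). Codegrees have mean `p² N = c log n`, far below `η p N`. The Chernoff
exponent of the weighted sum is then of order `δ² p² N / η`, which is at least `3 log n` once `η`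
is a small enough constant. Degrees and codegrees fail with much smaller probability, because
`p N / log n → ∞`.

All the probabilistic estimates are instances of one conditional Chernoff bound (`mgf_bound`,
`cond_dev`, `cond_tail`). A union bound over the at most `k N²` events of each kind
(`measure_compl_le`) gives failure probability at most `5 k N² n⁻³ = 5 k c² / n`.
-/

/-! ### Concentration of weighted sums of independent edges -/

/-- The real `0/1` indicator of a Boolean, so that `ind (ω e)` is the indicator of the edge `e`. -/
noncomputable def ind (b : Bool) : ℝ := if b = true then 1 else 0

lemma ind_nonneg (b : Bool) : 0 ≤ ind b := by unfold ind; split_ifs <;> norm_num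

lemma ind_le_one (b : Bool) : ind b ≤ 1 := by unfold ind; split_ifs <;> norm_num

lemma isProbabilityMeasure_bernoulliM {p : ℝ} (hp0 : 0 ≤ p) (hp1 : p ≤ 1) :
    IsProbabilityMeasure (bernoulliM p) := by
  constructor
  simp only [bernoulliM, Measure.add_apply, Measure.smul_apply, measure_univ, smul_eq_mul, mul_one]
  rw [← ENNReal.ofReal_add hp0 (by linarith)]
  simp

/-- Integrability is automatic on the two-point space. -/
lemma integral_bernoulliM {p : ℝ} (hp0 : 0 ≤ p) (hp1 : p ≤ 1) (f : Bool → ℝ) :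
    ∫ b, f b ∂(bernoulliM p) = p * f true + (1 - p) * f false := by
  have := isProbabilityMeasure_bernoulliM hp0 hp1
  unfold bernoulliM
  rw [integral_add_measure, integral_smul_measure, integral_smul_measure, integral_dirac,
    integral_dirac, ENNReal.toReal_ofReal hp0, ENNReal.toReal_ofReal (by linarith)]
  · simp
  · exact (Integrable.of_finite (μ := Measure.dirac true)).smul_measure ENNReal.ofReal_ne_top
  · exact (Integrable.of_finite (μ := Measure.dirac false)).smul_measure ENNReal.ofReal_ne_top

/-- Moment generating function of a weighted sum of independent Bernoulli variables with weights in
`[0, M]`, from `exp x ≤ 1 + x + x²` on `|x| ≤ 1`. The parameter `t` may be negative, which yields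
the lower tail. -/
lemma mgf_bound {β : Type*} [Fintype β] {p : ℝ} (hp0 : 0 ≤ p) (hp1 : p ≤ 1) (w : β → ℝ) (M t : ℝ)
    (hw : ∀ b, 0 ≤ w b ∧ w b ≤ M) (ht : |t| * M ≤ 1) :
    ∫ ω : β → Bool, Real.exp (t * ∑ b, w b * ind (ω b)) ∂(Measure.pi fun _ => bernoulliM p)
      ≤ Real.exp (p * (∑ b, w b) * (t + t ^ 2 * M)) := by
  have := isProbabilityMeasure_bernoulliM hp0 hp1
  have h1 : ∀ ω : β → Bool, Real.exp (t * ∑ b, w b * ind (ω b))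
      = ∏ b, Real.exp (t * (w b * ind (ω b))) := by
    intro ω; rw [Finset.mul_sum, Real.exp_sum]
  simp_rw [h1]
  rw [integral_fintype_prod_eq_prod (μ := fun _ : β => bernoulliM p)
    (fun b x => Real.exp (t * (w b * ind x)))]
  have h2 : Real.exp (p * (∑ b, w b) * (t + t ^ 2 * M))
      = ∏ b, Real.exp (p * (w b * (t + t ^ 2 * M))) := by
    rw [← Real.exp_sum, ← Finset.mul_sum, ← Finset.sum_mul, mul_assoc]
  rw [h2]
  apply Finset.prod_le_prod
  · intro b _
    exact integral_nonneg fun x => (Real.exp_pos _).le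
  · intro b _
    obtain ⟨hb0, hbM⟩ := hw b
    rw [integral_bernoulliM hp0 hp1]
    have habs : |t * w b| ≤ 1 := by
      rw [abs_mul, abs_of_nonneg hb0]
      exact (mul_le_mul_of_nonneg_left hbM (abs_nonneg t)).trans ht
    have hexp := (abs_le.mp (Real.abs_exp_sub_one_sub_id_le habs)).2
    have hsq : (t * w b) ^ 2 ≤ t ^ 2 * M * w b := by
      have : w b * w b ≤ M * w b := mul_le_mul_of_nonneg_right hbM hb0
      nlinarith [sq_nonneg t]
    have hlin : p * Real.exp (t * w b) ≤ p * (1 + w b * (t + t ^ 2 * M)) :=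
      mul_le_mul_of_nonneg_left (by nlinarith) hp0
    have := Real.add_one_le_exp (p * (w b * (t + t ^ 2 * M)))
    simp only [ind, if_true, mul_one, Bool.false_eq_true, if_false, mul_zero, Real.exp_zero]
    nlinarith

/-- Exponential Markov inequality for `t * S`; for `t < 0` this is a lower-tail bound on `S`. -/
lemma tail_bound {β : Type*} [Fintype β] {p : ℝ} (hp0 : 0 ≤ p) (hp1 : p ≤ 1) (w : β → ℝ)
    (M t T : ℝ) (hw : ∀ b, 0 ≤ w b ∧ w b ≤ M) (ht : |t| * M ≤ 1) :
    (Measure.pi fun _ : β => bernoulliM p) {ω | T ≤ t * ∑ b, w b * ind (ω b)}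
      ≤ ENNReal.ofReal (Real.exp (-T + p * (∑ b, w b) * (t + t ^ 2 * M))) := by
  have := isProbabilityMeasure_bernoulliM hp0 hp1
  have h := ProbabilityTheory.measure_ge_le_exp_mul_mgf
    (μ := Measure.pi fun _ : β => bernoulliM p) (X := fun ω => t * ∑ b, w b * ind (ω b))
    (t := 1) T zero_le_one Integrable.of_finite
  rw [← ENNReal.ofReal_toReal (measure_ne_top _ _)]
  apply ENNReal.ofReal_le_ofReal
  refine h.trans ?_
  rw [Real.exp_add]
  simp only [ProbabilityTheory.mgf, neg_mul, one_mul]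
  exact mul_le_mul_of_nonneg_left (mgf_bound hp0 hp1 w M t hw ht) (Real.exp_pos _).le

/-- Two-sided Chernoff bound for a weighted sum of Bernoulli variables. -/
lemma dev_bound {β : Type*} [Fintype β] {p : ℝ} (hp0 : 0 ≤ p) (hp1 : p ≤ 1) (w : β → ℝ)
    (M δ : ℝ) (hM : 0 < M) (hw : ∀ b, 0 ≤ w b ∧ w b ≤ M) (hδ0 : 0 < δ) (hδ1 : δ ≤ 1) :
    (Measure.pi fun _ : β => bernoulliM p)
        {ω | δ * (p * ∑ b, w b) ≤ |∑ b, w b * ind (ω b) - p * ∑ b, w b|}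
      ≤ ENNReal.ofReal (2 * Real.exp (-(δ ^ 2 * (p * ∑ b, w b) / (4 * M)))) := by
  set W := p * ∑ b, w b with hW
  -- `t = δ / (2M)` minimises the exponent `-t δ W + t² M W`
  set t := δ / (2 * M) with ht
  have ht0 : 0 < t := by positivity
  have htM : t * M = δ / 2 := by rw [ht]; field_simp
  have key : δ ^ 2 * W / (4 * M) = t * δ * W - W * (t ^ 2 * M) := by
    rw [ht]; field_simp; ring
  have h1 := tail_bound hp0 hp1 w M t (t * ((1 + δ) * W)) hw
    (by rw [abs_of_pos ht0, htM]; linarith)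
  have h2 := tail_bound hp0 hp1 w M (-t) (-t * ((1 - δ) * W)) hw
    (by rw [abs_neg, abs_of_pos ht0, htM]; linarith)
  rw [← hW] at h1 h2
  have e1 : -(t * ((1 + δ) * W)) + W * (t + t ^ 2 * M) = -(δ ^ 2 * W / (4 * M)) := by
    rw [key]; ring
  have e2 : -(-t * ((1 - δ) * W)) + W * (-t + (-t) ^ 2 * M) = -(δ ^ 2 * W / (4 * M)) := by
    rw [key]; ring
  rw [e1] at h1
  rw [e2] at h2
  rw [two_mul, ENNReal.ofReal_add (Real.exp_pos _).le (Real.exp_pos _).le]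
  refine le_trans (measure_mono ?_) ((measure_union_le _ _).trans (add_le_add h1 h2))
  intro ω hω
  simp only [Set.mem_ofPred_eq, Set.mem_union] at hω ⊢
  rcases le_abs.mp hω with h | h
  · left
    exact mul_le_mul_of_nonneg_left (by linarith) ht0.le
  · right
    nlinarith

/-- Resampling the coordinates in the range of `φ` preserves the product measure:
`Function.extend φ y ω` equals `y` on the range of `φ` and `ω` elsewhere. -/
lemma measurePreserving_extend {ι β : Type*} [Fintype ι] [Fintype β] {p : ℝ} (hp0 : 0 ≤ p)
    (hp1 : p ≤ 1) (φ : β → ι) (hφ : Function.Injective φ) :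
    MeasurePreserving (fun x : (ι → Bool) × (β → Bool) => Function.extend φ x.2 x.1)
      ((Measure.pi fun _ : ι => bernoulliM p).prod (Measure.pi fun _ : β => bernoulliM p))
      (Measure.pi fun _ : ι => bernoulliM p) := by
  have := isProbabilityMeasure_bernoulliM hp0 hp1
  refine ⟨measurable_of_finite _, ?_⟩
  symm
  apply Measure.pi_eq
  intro s _
  rw [Measure.map_apply (measurable_of_finite _) MeasurableSet.of_discrete]
  have hpre : (fun x : (ι → Bool) × (β → Bool) => Function.extend φ x.2 x.1) ⁻¹' Set.univ.pi s
      = (Set.univ.pi fun e => if e ∈ Set.range φ then Set.univ else s e) ×ˢ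
        (Set.univ.pi fun b => s (φ b)) := by
    ext ⟨x, y⟩
    simp only [Set.mem_preimage, Set.mem_pi, Set.mem_univ, true_implies, Set.mem_prod]
    constructor
    · intro h
      refine ⟨fun e => ?_, fun b => by simpa [hφ.extend_apply] using h (φ b)⟩
      split_ifs with he
      · trivial
      · simpa [Function.extend_apply' _ _ _ he] using h e
    · rintro ⟨h1, h2⟩ e
      by_cases he : e ∈ Set.range φ
      · obtain ⟨b, rfl⟩ := he
        simpa [hφ.extend_apply] using h2 b
      · have := h1 e
        rw [if_neg he] at this
        rwa [Function.extend_apply' _ _ _ he]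
  rw [hpre, Measure.prod_prod, Measure.pi_pi, Measure.pi_pi,
    ← Finset.prod_filter_mul_prod_filter_not Finset.univ (fun e => e ∈ Set.range φ)
      (fun e => bernoulliM p (s e)), mul_comm]
  congr 1
  · rw [← Finset.prod_image (f := fun e => bernoulliM p (s e)) (g := φ)
      (fun _ _ _ _ h => hφ h)]
    apply Finset.prod_congr _ (fun _ _ => rfl)
    ext e; simp
  · rw [Finset.prod_filter]
    apply Finset.prod_congr rfl
    intro e _
    by_cases he : e ∈ Set.range φ
    · rw [if_pos he, if_neg (not_not.mpr he)]
      exact measure_univ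
    · rw [if_neg he, if_pos he]

/-- Conditioning: if, for every way of fixing the other coordinates, resampling the coordinates in
the range of `φ` lands in `B` with probability at most `q`, then `B` has probability at most `q`. -/
lemma measure_le_of_sections {ι β : Type*} [Fintype ι] [Fintype β] {p : ℝ} (hp0 : 0 ≤ p)
    (hp1 : p ≤ 1) (φ : β → ι) (hφ : Function.Injective φ) (B : Set (ι → Bool)) (q : ℝ≥0∞)
    (h : ∀ ω, (Measure.pi fun _ : β => bernoulliM p) {y | Function.extend φ y ω ∈ B} ≤ q) :
    (Measure.pi fun _ : ι => bernoulliM p) B ≤ q := by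
  have := isProbabilityMeasure_bernoulliM hp0 hp1
  rw [← (measurePreserving_extend hp0 hp1 φ hφ).measure_preimage
    MeasurableSet.of_discrete.nullMeasurableSet, Measure.prod_apply MeasurableSet.of_discrete]
  calc _ ≤ ∫⁻ _ : ι → Bool, q ∂(Measure.pi fun _ : ι => bernoulliM p) := lintegral_mono h
    _ = q := by simp

/-- Conditional form of `dev_bound`: the weights are random, but do not depend on the coordinates
`φ b` being summed. The constraints on the weights are part of the event, so nothing has to be
assumed about atypical `ω`. -/
lemma cond_dev {ι β : Type*} [Fintype ι] [Fintype β] {p : ℝ} (hp0 : 0 ≤ p) (hp1 : p ≤ 1)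
    (φ : β → ι) (hφ : Function.Injective φ) (w : (ι → Bool) → β → ℝ)
    (hinv : ∀ ω y, w (Function.extend φ y ω) = w ω) (M W₀ δ : ℝ) (hM : 0 < M) (hδ0 : 0 < δ)
    (hδ1 : δ ≤ 1) :
    (Measure.pi fun _ : ι => bernoulliM p)
        {ω | (∀ b, 0 ≤ w ω b ∧ w ω b ≤ M) ∧ W₀ ≤ ∑ b, w ω b ∧
          δ * (p * ∑ b, w ω b) ≤ |∑ b, w ω b * ind (ω (φ b)) - p * ∑ b, w ω b|}
      ≤ ENNReal.ofReal (2 * Real.exp (-(δ ^ 2 * (p * W₀) / (4 * M)))) := by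
  apply measure_le_of_sections hp0 hp1 φ hφ
  intro ω
  simp only [Set.mem_ofPred_eq, hinv, hφ.extend_apply]
  by_cases h : (∀ b, 0 ≤ w ω b ∧ w ω b ≤ M) ∧ W₀ ≤ ∑ b, w ω b
  · refine (measure_mono ?_).trans
      ((dev_bound hp0 hp1 (w ω) M δ hM h.1 hδ0 hδ1).trans (ENNReal.ofReal_le_ofReal ?_))
    · exact fun y hy => hy.2.2
    · have := h.2
      gcongr
  · convert zero_le (α := ℝ≥0∞)
    convert measure_empty (μ := Measure.pi fun _ : β => bernoulliM p)
    ext y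
    simp only [Set.mem_ofPred_eq, Set.mem_empty_iff_false, iff_false]
    exact fun hy => h ⟨hy.1, hy.2.1⟩

/-- Conditional upper tail, used at thresholds far above the mean. -/
lemma cond_tail {ι β : Type*} [Fintype ι] [Fintype β] {p : ℝ} (hp0 : 0 ≤ p) (hp1 : p ≤ 1)
    (φ : β → ι) (hφ : Function.Injective φ) (w : (ι → Bool) → β → ℝ)
    (hinv : ∀ ω y, w (Function.extend φ y ω) = w ω) (hw : ∀ ω b, 0 ≤ w ω b ∧ w ω b ≤ 1)
    (W₀ T : ℝ) :
    (Measure.pi fun _ : ι => bernoulliM p)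
        {ω | ∑ b, w ω b ≤ W₀ ∧ T ≤ ∑ b, w ω b * ind (ω (φ b))}
      ≤ ENNReal.ofReal (Real.exp (-T + 2 * (p * W₀))) := by
  apply measure_le_of_sections hp0 hp1 φ hφ
  intro ω
  simp only [Set.mem_ofPred_eq, hinv, hφ.extend_apply]
  by_cases h : ∑ b, w ω b ≤ W₀
  · refine (measure_mono ?_).trans
      ((tail_bound hp0 hp1 (w ω) 1 1 T (hw ω) (by simp)).trans (ENNReal.ofReal_le_ofReal ?_))
    · intro y hy
      simpa using hy.2
    · have : p * ∑ b, w ω b ≤ p * W₀ := mul_le_mul_of_nonneg_left h hp0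
      apply Real.exp_le_exp.mpr
      linarith
  · simp [h]


/-! ### Walks through a sequence of layers -/

/-- `walkWeight A a j w` is the `(a, w)` entry of the product `A 0 * A 1 * ⋯ * A (j - 1)`. For `0/1`
matrices it is the number of walks from `a` to `w` whose `l`-th step is an edge of `A l`. -/
noncomputable def walkWeight {N : ℕ} (A : ℕ → Fin N → Fin N → ℝ) (a : Fin N) : ℕ → Fin N → ℝ
  | 0 => fun w => if w = a then 1 else 0
  | j + 1 => fun w => ∑ u, walkWeight A a j u * A j u w

section Walks

variable {N : ℕ} (A : ℕ → Fin N → Fin N → ℝ) (a : Fin N)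

lemma walkWeight_congr {A B : ℕ → Fin N → Fin N → ℝ} (j : ℕ) (h : ∀ l < j, A l = B l) :
    walkWeight A a j = walkWeight B a j := by
  induction j with
  | zero => rfl
  | succ j ih =>
    funext w
    simp only [walkWeight]
    rw [ih fun l hl => h l (by omega), h j (by omega)]

/-- Expansion of the matrix product `walkWeight A a m` as a sum over all vertex sequences, tested
against a function `h` of the endpoint. -/
lemma sum_walks (m : ℕ) (h : Fin N → ℝ) :
    ∑ f : Fin (m + 1) → Fin N, (if f 0 = a then 1 else 0) *
        (∏ l : Fin m, A l (f l.castSucc) (f l.succ)) * h (f (Fin.last m))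
      = ∑ w, walkWeight A a m w * h w := by
  induction m generalizing h with
  | zero =>
    rw [← (Equiv.funUnique (Fin 1) (Fin N)).symm.sum_comp]
    simp [walkWeight]
  | succ m ih =>
    rw [← (Fin.snocEquiv (fun _ : Fin (m + 2) => Fin N)).sum_comp, Fintype.sum_prod_type_right]
    have hstep : ∀ g : Fin (m + 1) → Fin N, ∀ w : Fin N,
        (if (Fin.snoc g w : Fin (m + 2) → Fin N) 0 = a then (1 : ℝ) else 0) *
        (∏ l : Fin (m + 1), A l ((Fin.snoc g w : Fin (m + 2) → Fin N) l.castSucc)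
          ((Fin.snoc g w : Fin (m + 2) → Fin N) l.succ)) *
          h ((Fin.snoc g w : Fin (m + 2) → Fin N) (Fin.last (m + 1)))
        = (if g 0 = a then 1 else 0) * (∏ l : Fin m, A l (g l.castSucc) (g l.succ)) *
          (A m (g (Fin.last m)) w * h w) := by
      intro g w
      rw [Fin.prod_univ_castSucc]
      have h0 : (Fin.snoc g w : Fin (m + 2) → Fin N) 0 = g 0 := by
        rw [← Fin.castSucc_zero, Fin.snoc_castSucc]
      have hl : (Fin.snoc g w : Fin (m + 2) → Fin N) (Fin.last m).succ = w := by
        rw [Fin.succ_last, Fin.snoc_last]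
      simp only [h0, hl, Fin.snoc_castSucc, Fin.snoc_last, Fin.succ_castSucc, Fin.val_castSucc,
        Fin.val_last]
      ring
    refine (Finset.sum_congr rfl fun g _ => Finset.sum_congr rfl fun w _ => hstep g w).trans ?_
    simp_rw [← Finset.mul_sum]
    rw [ih (fun u => ∑ w, A m u w * h w)]
    simp only [walkWeight, Finset.mul_sum, Finset.sum_mul]
    rw [Finset.sum_comm]
    simp only [mul_assoc]

variable {A}

lemma walkWeight_nonneg (hA : ∀ l u w, 0 ≤ A l u w) (j : ℕ) (w : Fin N) :
    0 ≤ walkWeight A a j w := by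
  induction j generalizing w with
  | zero => simp only [walkWeight]; split_ifs <;> norm_num
  | succ j ih => exact Finset.sum_nonneg fun u _ => mul_nonneg (ih u) (hA _ _ _)

lemma sum_walkWeight_succ (j : ℕ) :
    ∑ w, walkWeight A a (j + 1) w = ∑ u, walkWeight A a j u * ∑ w, A j u w := by
  simp only [walkWeight, Finset.mul_sum]
  exact Finset.sum_comm

/-- Row sums at least `d` multiply up along walks. -/
lemma le_sum_walkWeight (hA : ∀ l u w, 0 ≤ A l u w) {d : ℝ} (hd0 : 0 ≤ d)
    (hd : ∀ l u, d ≤ ∑ w, A l u w) (j : ℕ) : d ^ j ≤ ∑ w, walkWeight A a j w := by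
  induction j with
  | zero => simp [walkWeight]
  | succ j ih =>
    rw [sum_walkWeight_succ, pow_succ]
    calc d ^ j * d ≤ (∑ w, walkWeight A a j w) * d := mul_le_mul_of_nonneg_right ih hd0
      _ ≤ _ := by
        rw [Finset.sum_mul]
        exact Finset.sum_le_sum fun u _ =>
          mul_le_mul_of_nonneg_left (hd j u) (walkWeight_nonneg a hA j u)

lemma sum_walkWeight_le (hA : ∀ l u w, 0 ≤ A l u w) {d : ℝ} (hd0 : 0 ≤ d)
    (hd : ∀ l u, ∑ w, A l u w ≤ d) (j : ℕ) : ∑ w, walkWeight A a j w ≤ d ^ j := by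
  induction j with
  | zero => simp [walkWeight]
  | succ j ih =>
    rw [sum_walkWeight_succ, pow_succ]
    calc _ ≤ (∑ w, walkWeight A a j w) * d := by
          rw [Finset.sum_mul]
          exact Finset.sum_le_sum fun u _ =>
            mul_le_mul_of_nonneg_left (hd j u) (walkWeight_nonneg a hA j u)
      _ ≤ _ := mul_le_mul_of_nonneg_right ih hd0

/-- Splitting off the last two steps: entries of the two-step products (codegrees) control the
largest number of walks to a single endpoint. -/
lemma walkWeight_add_two_le (hA : ∀ l u w, 0 ≤ A l u w) {T : ℝ}
    (hT : ∀ l u w, ∑ t, A l u t * A (l + 1) t w ≤ T) (j : ℕ) (w : Fin N) :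
    walkWeight A a (j + 2) w ≤ (∑ u, walkWeight A a j u) * T := by
  have : walkWeight A a (j + 2) w
      = ∑ u, walkWeight A a j u * ∑ t, A j u t * A (j + 1) t w := by
    simp only [walkWeight, Finset.mul_sum, Finset.sum_mul]
    rw [Finset.sum_comm]
    simp only [mul_assoc]
  rw [this, Finset.sum_mul]
  exact Finset.sum_le_sum fun u _ =>
    mul_le_mul_of_nonneg_left (hT j u w) (walkWeight_nonneg a hA j u)

end Walks

/-! ### Proper cycles as closed walks -/

/-- The part reached from part `i` after `j` steps around the cycle of parts, i.e. `i + j mod k`. -/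
def layer {k : ℕ} (i : Fin k) (j : ℕ) : Fin k :=
  ⟨((i : ℕ) + j) % k, Nat.mod_lt _ (Nat.zero_lt_of_lt i.isLt)⟩

/-- The `0/1` biadjacency matrix between the parts `i + j` and `i + j + 1` (modulo `k`). -/
noncomputable def biadj {k N : ℕ} (ω : Fin k × Fin N × Fin N → Bool) (i : Fin k) (j : ℕ)
    (u w : Fin N) : ℝ := ind (ω (layer i j, u, w))

lemma layer_inj {k : ℕ} (i : Fin k) {j l : ℕ} (hj : j < k) (hl : l < k)
    (h : layer i j = layer i l) : j = l := by
  have h' : (i + j) ≡ (i + l) [MOD k] := congrArg Fin.val h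
  exact (Nat.ModEq.add_left_cancel' _ h').eq_of_lt_of_lt hj hl

/-- For `k ≥ 3` the symmetrisation in `randGraph` adds nothing between consecutive parts: an edge
from part `i` to part `i + 1` is recorded by exactly one coordinate of `ω`. -/
lemma adj_iff {k N : ℕ} (hk : 3 ≤ k) (ω : Fin k × Fin N × Fin N → Bool) (u v : Fin k × Fin N)
    (h : ((u.1 : ℕ) + 1) % k = v.1) :
    (randGraph k N ω).Adj u v ↔ ω (u.1, u.2, v.2) = true := by
  have hu := u.1.isLt
  have hne : ((v.1 : ℕ) + 1) % k ≠ u.1 := by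
    intro h'
    rw [← h, Nat.mod_add_mod, Nat.mod_eq_iff] at h'
    rcases h' with h' | ⟨_, c, h'⟩
    · omega
    · have hc : c < 2 := by
        by_contra! hc
        nlinarith [Nat.mul_le_mul_left k hc]
      interval_cases c <;> omega
  have huv : u ≠ v := by
    rintro rfl
    rw [Nat.mod_eq_iff] at h
    rcases h with h | ⟨_, c, h⟩
    · omega
    · have hc : c < 2 := by
        by_contra! hc
        nlinarith [Nat.mul_le_mul_left k hc]
      interval_cases c <;> omega
  simp [randGraph, SimpleGraph.fromRel_adj, h, hne, huv]

/-- A proper cycle through `(i, a)`, given by its vertex set, is the same as a sequence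
`f 0 = a, f 1, …, f m` with `f l` in part `i + l`: the vertex set meets each part once, so it
determines the sequence. -/
lemma XvCount_eq_card {m N : ℕ} (hm : 2 ≤ m) (ω : Fin (m + 1) × Fin N × Fin N → Bool)
    (i : Fin (m + 1)) (a : Fin N) :
    XvCount (m + 1) (randGraph (m + 1) N ω) (randPart (m + 1) N) (i, a)
      = (Finset.univ.filter fun f : Fin (m + 1) → Fin N => f 0 = a ∧
          (∀ l : Fin m, ω (layer i l, f l.castSucc, f l.succ) = true) ∧
          ω (layer i m, f (Fin.last m), f 0) = true).card := by
  symm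
  unfold XvCount properCycles
  rw [Finset.filter_filter]
  have hlayer : ∀ l : ℕ, l < m + 1 → layer i ((l + (m + 1 - i)) % (m + 1)) = ⟨l % (m+1), Nat.mod_lt _ (by omega)⟩ := by
    intro l hl
    apply Fin.ext
    have := i.isLt
    simp only [layer, Nat.add_mod_mod]
    rw [show (i : ℕ) + (l + (m + 1 - i)) = l + (m + 1) by omega, Nat.add_mod_right]
  refine Finset.card_bij
    (fun f _ => Finset.univ.image fun j : Fin (m + 1) => (layer i j, f j)) ?_ ?_ ?_
  · intro f hf
    simp only [Finset.mem_filter, Finset.mem_univ, true_and] at hf ⊢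
    obtain ⟨h0, h1, h2⟩ := hf
    refine ⟨?_, ?_⟩
    · -- the cycle, re-indexed so that its `l`-th vertex lies in part `l`
      let s : ℕ → Fin (m + 1) := fun l => ⟨(l + (m + 1 - i)) % (m + 1), Nat.mod_lt _ (by omega)⟩
      have hs : ∀ l < m + 1, (layer i (s l) : ℕ) = l := by
        intro l hl
        simp only [s, hlayer l hl, Nat.mod_eq_of_lt hl]
      refine ⟨fun l => (layer i (s l), f (s l)), ?_, fun l hl => hs l hl, ?_⟩
      · ext x
        simp only [Finset.mem_image, Finset.mem_univ, true_and, Finset.mem_range]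
        constructor
        · rintro ⟨j, rfl⟩
          have hsj : s (layer i j) = j := by
            apply Fin.ext
            exact layer_inj i (s _).isLt j.isLt (Fin.ext (hs _ (layer i j).isLt))
          exact ⟨layer i j, (layer i j).isLt, by rw [hsj]⟩
        · rintro ⟨l, _, rfl⟩
          exact ⟨s l, rfl⟩
      · intro l hl
        have hl' : (l + 1) % (m + 1) < m + 1 := Nat.mod_lt _ (by omega)
        rw [adj_iff (by omega) _ _ _ (by simp only [hs l hl, hs _ hl'])]
        simp only
        have hsucc : (s ((l + 1) % (m + 1)) : ℕ) = ((s l : ℕ) + 1) % (m + 1) := by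
          simp only [s, Nat.mod_add_mod]
          congr 1; ring
        -- the step leaving position `m` is the closing edge of the cycle
        by_cases hlast : (s l : ℕ) = m
        · have e1 : s l = Fin.last m := Fin.ext hlast
          have e2 : s ((l + 1) % (m + 1)) = 0 := by
            apply Fin.ext; rw [hsucc, hlast]; simp
          rw [e1, e2]; exact h2
        · have hlt : (s l : ℕ) < m := by have := (s l).isLt; omega
          have e1 : s l = (⟨s l, hlt⟩ : Fin m).castSucc := rfl
          have e2 : s ((l + 1) % (m + 1)) = (⟨s l, hlt⟩ : Fin m).succ := by
            apply Fin.ext; rw [hsucc, Nat.mod_eq_of_lt (by omega)]; rfl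
          rw [e2]
          exact h1 ⟨s l, hlt⟩
    · refine Finset.mem_image.mpr ⟨0, Finset.mem_univ _, ?_⟩
      rw [h0]
      simp [layer, Nat.mod_eq_of_lt i.isLt]
  · intro f _ g _ hfg
    funext j
    have hmem : (layer i j, f j) ∈ Finset.univ.image fun j : Fin (m + 1) => (layer i j, g j) := by
      rw [← hfg]
      exact Finset.mem_image.mpr ⟨j, Finset.mem_univ _, rfl⟩
    obtain ⟨j', _, hj'⟩ := Finset.mem_image.mp hmem
    have hjj : j' = j := Fin.ext (layer_inj i j'.isLt j.isLt (congrArg Prod.fst hj'))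
    subst hjj
    exact (congrArg Prod.snd hj').symm
  · intro S hS
    simp only [Finset.mem_filter, Finset.mem_univ, true_and] at hS
    obtain ⟨⟨w, rfl, hw, hadj⟩, hv⟩ := hS
    have hw' : ∀ j, (w (layer i j)).1 = layer i j := fun j =>
      Fin.ext (hw _ (layer i j).isLt)
    have hi : w (layer i 0) = (i, a) := by
      obtain ⟨l, hl, hla⟩ := (@Finset.mem_image _ _ (_) _ _ _).mp hv
      have : l = i := by
        have := hw l (Finset.mem_range.mp hl)
        rw [hla] at this
        exact this.symm
      rw [← hla, this]
      simp [layer, Nat.mod_eq_of_lt i.isLt]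
    have hedge : ∀ j, ω (layer i j, (w (layer i j)).2, (w (layer i (j + 1))).2) = true := by
      intro j
      have h := hadj (layer i j) (layer i j).isLt
      have hnext : ((layer i j : ℕ) + 1) % (m + 1) = layer i (j + 1) := by
        simp [layer, Nat.mod_add_mod, add_assoc]
      rw [hnext, adj_iff (by omega) _ _ _ (by rw [hw', hw', hnext]), hw'] at h
      exact h
    refine ⟨fun j => (w (layer i j)).2, ?_, ?_⟩
    · simp only [Finset.mem_filter, Finset.mem_univ, true_and]
      refine ⟨by simp [hi], fun l => by simpa using hedge l, ?_⟩
      have := hedge m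
      have hwrap : layer i (m + 1) = layer i ((0 : Fin (m + 1)) : ℕ) := by simp [layer]
      rw [hwrap] at this
      exact this
    · ext x
      simp only [Finset.mem_image, Finset.mem_univ, true_and, Finset.mem_range]
      constructor
      · rintro ⟨j, rfl⟩
        exact ⟨layer i j, (layer i j).isLt, Prod.ext (hw' j) rfl⟩
      · rintro ⟨l, hl, rfl⟩
        refine ⟨⟨(l + (m + 1 - i)) % (m + 1), Nat.mod_lt _ (by omega)⟩, ?_⟩
        have e := hlayer l hl
        have e' : ((layer i ((l + (m + 1 - i)) % (m + 1)) : Fin (m + 1)) : ℕ) = l := by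
          rw [e]; exact Nat.mod_eq_of_lt hl
        refine Prod.ext ?_ ?_
        · apply Fin.ext
          simp only [e']
          exact (hw l hl).symm
        · simp only [e']

/-- `X_v` counts walks of `m` steps starting at `v`, weighted by the presence of the closing edge back
to `v`. -/
lemma XvCount_eq {m N : ℕ} (hm : 2 ≤ m) (ω : Fin (m + 1) × Fin N × Fin N → Bool)
    (i : Fin (m + 1)) (a : Fin N) :
    (XvCount (m + 1) (randGraph (m + 1) N ω) (randPart (m + 1) N) (i, a) : ℝ)
      = ∑ w, walkWeight (biadj ω i) a m w * ind (ω (layer i m, w, a)) := by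
  rw [XvCount_eq_card hm, ← sum_walks, Finset.card_filter]
  push_cast
  apply Finset.sum_congr rfl
  intro f _
  by_cases h0 : f 0 = a
  · by_cases h1 : ∀ l : Fin m, ω (layer i l, f l.castSucc, f l.succ) = true
    · have : ∏ l : Fin m, biadj ω i l (f l.castSucc) (f l.succ) = 1 :=
        Finset.prod_eq_one fun l _ => by simp [biadj, ind, h1 l]
      rw [this]
      simp [h0, h1, ind]
    · rw [if_neg (by tauto)]
      push Not at h1
      obtain ⟨l, hl⟩ := h1
      rw [Finset.prod_eq_zero (Finset.mem_univ l) (by simp [biadj, ind, hl])]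
      simp
  · simp [h0]

/-! ### The exceptional events -/

lemma layer_layer_one {k : ℕ} (i : Fin k) (l : ℕ) : layer (layer i l) 1 = layer i (l + 1) := by
  apply Fin.ext
  simp [layer, Nat.mod_add_mod, add_assoc]

/-- The number of neighbours of the vertex `x` in the next part deviates from `pN` by a factor outside
`(1 - δ, 1 + δ)`. -/
def badDegree (k N : ℕ) (p δ : ℝ) (x : Fin k × Fin N) : Set (Fin k × Fin N × Fin N → Bool) :=
  {ω | δ * (p * N) ≤ |∑ b, ind (ω (x.1, x.2, b)) - p * N|}

/-- For `x = (i, a, w)`, with `a` in part `i` and `w` in part `i + 2`: the vertices `a` and `w` have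
at least `T` common neighbours in part `i + 1`, although `a` has at most `2pN` neighbours there.
The degree constraint keeps the conditional mean of the codegree under control. -/
def badCodegree (k N : ℕ) (p T : ℝ) (x : Fin k × Fin N × Fin N) :
    Set (Fin k × Fin N × Fin N → Bool) :=
  {ω | ∑ u, ind (ω (x.1, x.2.1, u)) ≤ 2 * (p * N) ∧
    T ≤ ∑ u, ind (ω (x.1, x.2.1, u)) * ind (ω (layer x.1 1, u, x.2.2))}

/-- The walk counts from `x` to the last part are individually at most `M` and sum to at least `W₀`,
yet the number of closed walks (the sum of these counts over the present closing edges) deviates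
from its conditional mean. -/
def badClosing (m N : ℕ) (p δ M W₀ : ℝ) (x : Fin (m + 1) × Fin N) :
    Set (Fin (m + 1) × Fin N × Fin N → Bool) :=
  {ω | (∀ w, 0 ≤ walkWeight (biadj ω x.1) x.2 m w ∧ walkWeight (biadj ω x.1) x.2 m w ≤ M) ∧
    W₀ ≤ ∑ w, walkWeight (biadj ω x.1) x.2 m w ∧
    δ * (p * ∑ w, walkWeight (biadj ω x.1) x.2 m w) ≤
      |∑ w, walkWeight (biadj ω x.1) x.2 m w * ind (ω (layer x.1 m, w, x.2))
        - p * ∑ w, walkWeight (biadj ω x.1) x.2 m w|}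

section Events

variable {p : ℝ} (hp0 : 0 ≤ p) (hp1 : p ≤ 1)
include hp0 hp1

lemma measure_badDegree_le {k N : ℕ} {δ : ℝ} (hδ0 : 0 < δ) (hδ1 : δ ≤ 1) (x : Fin k × Fin N) :
    edgeMeasure k N p (badDegree k N p δ x)
      ≤ ENNReal.ofReal (2 * Real.exp (-(δ ^ 2 * (p * N) / 4))) := by
  have h := cond_dev hp0 hp1 (fun b : Fin N => (x.1, x.2, b))
    (fun b b' h => by simpa using h) (fun _ _ => 1) (fun _ _ => rfl) 1 N δ one_pos hδ0 hδ1
  simpa [badDegree, edgeMeasure] using h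

/-- Conditionally on the edges between parts `i` and `i + 1`, the codegree is a sum of independent
Bernoulli variables. -/
lemma measure_badCodegree_le {k N : ℕ} (hk : 2 ≤ k) (T : ℝ) (x : Fin k × Fin N × Fin N) :
    edgeMeasure k N p (badCodegree k N p T x)
      ≤ ENNReal.ofReal (Real.exp (-T + 2 * (p * (2 * (p * N))))) := by
  obtain ⟨i, a, w⟩ := x
  have hne : layer i 1 ≠ i := by
    intro h
    have h0 : layer i 0 = i := Fin.ext (by simp [layer, Nat.mod_eq_of_lt i.isLt])
    exact absurd (layer_inj i (by omega) (by omega) (h.trans h0.symm)) one_ne_zero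
  refine cond_tail hp0 hp1 (fun u : Fin N => (layer i 1, u, w)) (fun b b' h => by simpa using h)
    (fun ω u => ind (ω (i, a, u))) ?_ (fun ω u => ⟨ind_nonneg _, ind_le_one _⟩) _ _
  intro ω y
  funext u
  rw [Function.extend_apply']
  rintro ⟨b, hb⟩
  exact hne (congrArg Prod.fst hb)

/-- The walk counts of length `m` use only the edges outside the last layer, so they are fixed weights
once everything but the closing edges is revealed. -/
lemma measure_badClosing_le {m N : ℕ} {δ M W₀ : ℝ} (hδ0 : 0 < δ) (hδ1 : δ ≤ 1) (hM : 0 < M)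
    (x : Fin (m + 1) × Fin N) :
    edgeMeasure (m + 1) N p (badClosing m N p δ M W₀ x)
      ≤ ENNReal.ofReal (2 * Real.exp (-(δ ^ 2 * (p * W₀) / (4 * M)))) := by
  obtain ⟨i, a⟩ := x
  refine cond_dev hp0 hp1 (fun w : Fin N => (layer i m, w, a)) (fun b b' h => by simpa using h)
    (fun ω w => walkWeight (biadj ω i) a m w) ?_ M W₀ δ hM hδ0 hδ1
  intro ω y
  refine walkWeight_congr a m fun l hl => ?_
  funext u w
  unfold biadj
  rw [Function.extend_apply']
  rintro ⟨b, hb⟩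
  have := layer_inj i (by omega) (by omega) (congrArg Prod.fst hb)
  omega

end Events

/-! ### Counting cycles outside the exceptional events -/

/-- Outside the exceptional events every `X_v` is within the factors `(1 ± δ)^(m+1)` of
`N^m p^(m+1)`. -/
lemma XvCount_bounds {m N : ℕ} (hm : 2 ≤ m) {p δ T : ℝ} (hp0 : 0 ≤ p) (hδ0 : 0 < δ)
    (hδ1 : δ ≤ 1) (hT : 0 ≤ T) (ω : Fin (m + 1) × Fin N × Fin N → Bool)
    (h1 : ∀ x, ω ∉ badDegree (m + 1) N p δ x) (h2 : ∀ x, ω ∉ badCodegree (m + 1) N p T x)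
    (h3 : ∀ x, ω ∉ badClosing m N p δ (((1 + δ) * (p * N)) ^ (m - 2) * T)
      (((1 - δ) * (p * N)) ^ m) x) (v : Fin (m + 1) × Fin N) :
    (1 - δ) ^ (m + 1) * (N : ℝ) ^ m * p ^ (m + 1)
        ≤ (XvCount (m + 1) (randGraph (m + 1) N ω) (randPart (m + 1) N) v : ℝ) ∧
      (XvCount (m + 1) (randGraph (m + 1) N ω) (randPart (m + 1) N) v : ℝ)
        ≤ (1 + δ) ^ (m + 1) * (N : ℝ) ^ m * p ^ (m + 1) := by
  obtain ⟨i, a⟩ := v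
  have hD : 0 ≤ p * N := by positivity
  have hA : ∀ l u w, 0 ≤ biadj ω i l u w := fun l u w => ind_nonneg _
  have hdeg : ∀ j u, (1 - δ) * (p * N) ≤ ∑ b, ind (ω (j, u, b)) ∧
      ∑ b, ind (ω (j, u, b)) ≤ (1 + δ) * (p * N) := by
    intro j u
    have := h1 (j, u)
    simp only [badDegree, Set.mem_ofPred_eq, not_le] at this
    obtain ⟨ha, hb⟩ := abs_lt.mp this
    constructor <;> linarith
  have hlow := le_sum_walkWeight a hA (mul_nonneg (by linarith) hD) (d := (1 - δ) * (p * N))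
    (fun l u => (hdeg _ _).1) m
  have hup := fun j => sum_walkWeight_le a hA (mul_nonneg (by linarith) hD)
    (d := (1 + δ) * (p * N)) (fun l u => (hdeg _ _).2) j
  have hcod : ∀ l u w, ∑ t, biadj ω i l u t * biadj ω i (l + 1) t w ≤ T := by
    intro l u w
    have := h2 (layer i l, u, w)
    simp only [badCodegree, Set.mem_ofPred_eq, not_and, not_le, layer_layer_one] at this
    refine (this ((hdeg _ _).2.trans ?_)).le
    nlinarith
  have hmax : ∀ w, walkWeight (biadj ω i) a m w ≤ ((1 + δ) * (p * N)) ^ (m - 2) * T := by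
    intro w
    have := walkWeight_add_two_le a hA hcod (m - 2) w
    rw [Nat.sub_add_cancel hm] at this
    exact this.trans (mul_le_mul_of_nonneg_right (hup _) hT)
  have hclose := h3 (i, a)
  simp only [badClosing, Set.mem_ofPred_eq, not_and, not_le] at hclose
  have hc := hclose (fun w => ⟨walkWeight_nonneg a hA m w, hmax w⟩) hlow
  rw [← XvCount_eq hm] at hc
  obtain ⟨ha, hb⟩ := abs_lt.mp hc
  have hupm := hup m
  set F := ∑ w, walkWeight (biadj ω i) a m w
  constructor
  · calc (1 - δ) ^ (m + 1) * (N : ℝ) ^ m * p ^ (m + 1)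
        = (1 - δ) * p * ((1 - δ) * (p * N)) ^ m := by rw [mul_pow, mul_pow]; ring
      _ ≤ (1 - δ) * p * F :=
        mul_le_mul_of_nonneg_left hlow (mul_nonneg (by linarith) hp0)
      _ ≤ _ := by linarith
  · calc _ ≤ (1 + δ) * p * F := by linarith
      _ ≤ (1 + δ) * p * ((1 + δ) * (p * N)) ^ m :=
        mul_le_mul_of_nonneg_left hupm (mul_nonneg (by linarith) hp0)
      _ = _ := by rw [mul_pow, mul_pow]; ring

/-- Union bound over the exceptional events, each of which has probability at most
`2 exp (-3L)` under the three conditions relating `L` to `p` and `N`. -/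
lemma measure_compl_le {m N : ℕ} (hm : 2 ≤ m) (hN : 1 ≤ N) {p δ η L : ℝ} (hp0 : 0 < p)
    (hp1 : p ≤ 1) (hδ0 : 0 < δ) (hδ1 : δ < 1)
    (hη : η = δ ^ 2 * (1 - δ) ^ m / (12 * (1 + δ) ^ (m - 2)))
    (hL1 : 3 * L ≤ δ ^ 2 * (p * N) / 4) (hL2 : 3 * L ≤ η * (p * N) - 4 * (p * (p * N)))
    (hL3 : L ≤ p * (p * N)) :
    edgeMeasure (m + 1) N p {ω | ∀ v : Fin (m + 1) × Fin N,
        (1 - δ) ^ (m + 1) * (N : ℝ) ^ m * p ^ (m + 1)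
          ≤ (XvCount (m + 1) (randGraph (m + 1) N ω) (randPart (m + 1) N) v : ℝ) ∧
        (XvCount (m + 1) (randGraph (m + 1) N ω) (randPart (m + 1) N) v : ℝ)
          ≤ (1 + δ) ^ (m + 1) * (N : ℝ) ^ m * p ^ (m + 1)}ᶜ
      ≤ ENNReal.ofReal (5 * (m + 1) * N ^ 2 * Real.exp (-(3 * L))) := by
  have hN' : (1 : ℝ) ≤ N := by exact_mod_cast hN
  have hD : 0 < p * N := by positivity
  have hδ' : 0 < 1 - δ := by linarith
  have hη0 : 0 < η := by rw [hη]; positivity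
  set T := η * (p * N) with hT
  have hT0 : 0 < T := by positivity
  set M := ((1 + δ) * (p * N)) ^ (m - 2) * T with hM
  have hM0 : 0 < M := by positivity
  set W₀ := ((1 - δ) * (p * N)) ^ m with hW
  set q := Real.exp (-(3 * L)) with hq
  have hq0 : 0 < q := Real.exp_pos _
  have e1 : ∀ x, edgeMeasure (m + 1) N p (badDegree (m + 1) N p δ x) ≤ ENNReal.ofReal (2 * q) :=
    fun x => (measure_badDegree_le hp0.le hp1 hδ0 hδ1.le x).trans
      (ENNReal.ofReal_le_ofReal
        (mul_le_mul_of_nonneg_left (Real.exp_le_exp.mpr (by linarith)) zero_le_two))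
  have e2 : ∀ x, edgeMeasure (m + 1) N p (badCodegree (m + 1) N p T x) ≤ ENNReal.ofReal q :=
    fun x => (measure_badCodegree_le hp0.le hp1 (by omega) T x).trans
      (ENNReal.ofReal_le_ofReal (Real.exp_le_exp.mpr (by linarith)))
  have e3 : ∀ x, edgeMeasure (m + 1) N p (badClosing m N p δ M W₀ x)
      ≤ ENNReal.ofReal (2 * q) := by
    intro x
    refine (measure_badClosing_le hp0.le hp1 hδ0 hδ1.le hM0 x).trans
      (ENNReal.ofReal_le_ofReal ?_)
    -- the choice of `η` makes this exponent exactly `3 p² N`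
    have hexp : δ ^ 2 * (p * W₀) / (4 * M) = 3 * (p * (p * N)) := by
      rw [div_eq_iff (by positivity), hM, hT, hW, hη]
      obtain ⟨r, rfl⟩ := Nat.exists_eq_add_of_le' hm
      rw [Nat.add_sub_cancel, mul_pow, mul_pow (1 + δ)]
      field_simp
      ring
    rw [hexp]
    exact mul_le_mul_of_nonneg_left (Real.exp_le_exp.mpr (by linarith)) zero_le_two
  have hsub : {ω | ∀ v : Fin (m + 1) × Fin N,
        (1 - δ) ^ (m + 1) * (N : ℝ) ^ m * p ^ (m + 1)
          ≤ (XvCount (m + 1) (randGraph (m + 1) N ω) (randPart (m + 1) N) v : ℝ) ∧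
        (XvCount (m + 1) (randGraph (m + 1) N ω) (randPart (m + 1) N) v : ℝ)
          ≤ (1 + δ) ^ (m + 1) * (N : ℝ) ^ m * p ^ (m + 1)}ᶜ
      ⊆ ((⋃ x, badDegree (m + 1) N p δ x) ∪ ⋃ x, badCodegree (m + 1) N p T x) ∪
        ⋃ x, badClosing m N p δ M W₀ x := by
    intro ω hω
    by_contra hcon
    simp only [Set.mem_union, Set.mem_iUnion, not_or, not_exists] at hcon
    exact hω (XvCount_bounds hm hp0.le hδ0 hδ1.le hT0.le ω hcon.1.1 hcon.1.2 hcon.2)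
  have hun : ∀ {ι : Type} [Fintype ι] (B : ι → Set (Fin (m + 1) × Fin N × Fin N → Bool)) (r : ℝ),
      0 ≤ r → (∀ x, edgeMeasure (m + 1) N p (B x) ≤ ENNReal.ofReal r) →
      edgeMeasure (m + 1) N p (⋃ x, B x) ≤ ENNReal.ofReal (Fintype.card ι * r) := by
    intro ι _ B r hr h
    refine (measure_iUnion_fintype_le _ _).trans ((Finset.sum_le_sum fun x _ => h x).trans ?_)
    rw [Finset.sum_const, Finset.card_univ, nsmul_eq_mul, ENNReal.ofReal_mul (by positivity),
      ENNReal.ofReal_natCast]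
  refine (measure_mono hsub).trans ((measure_union_le _ _).trans
    ((add_le_add ((measure_union_le _ _).trans (add_le_add (hun _ _ (by positivity) e1)
      (hun _ _ hq0.le e2))) (hun _ _ (by positivity) e3)).trans ?_))
  rw [← ENNReal.ofReal_add (by positivity) (by positivity),
    ← ENNReal.ofReal_add (by positivity) (by positivity)]
  apply ENNReal.ofReal_le_ofReal
  simp only [Fintype.card_prod, Fintype.card_fin]
  push_cast
  have hNN : (N : ℝ) ≤ N ^ 2 := by nlinarith
  have : ((m : ℝ) + 1) * q * N ≤ (m + 1) * q * N ^ 2 :=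
    mul_le_mul_of_nonneg_left hNN (by positivity)
  linarith

/-! ### Asymptotics -/

lemma exists_delta (k : ℕ) {ε : ℝ} (hε : 0 < ε) :
    ∃ δ : ℝ, 0 < δ ∧ δ < 1 ∧ (1 + δ) ^ k ≤ 1 + ε ∧ 1 - ε ≤ (1 - δ) ^ k := by
  have h1 : Filter.Tendsto (fun δ : ℝ => (1 + δ) ^ k) (nhdsWithin 0 (Set.Ioi 0)) (nhds 1) :=
    ((by fun_prop : Continuous fun δ : ℝ => (1 + δ) ^ k).tendsto' 0 1 (by simp)).mono_left
      nhdsWithin_le_nhds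
  have h2 : Filter.Tendsto (fun δ : ℝ => (1 - δ) ^ k) (nhdsWithin 0 (Set.Ioi 0)) (nhds 1) :=
    ((by fun_prop : Continuous fun δ : ℝ => (1 - δ) ^ k).tendsto' 0 1 (by simp)).mono_left
      nhdsWithin_le_nhds
  obtain ⟨δ, ha, hb, hc⟩ := ((h1.eventually_le_const (by linarith : (1 : ℝ) < 1 + ε)).and
    ((h2.eventually_const_le (by linarith : 1 - ε < (1 : ℝ))).and
      (Ioo_mem_nhdsGT (zero_lt_one' ℝ)))).exists
  exact ⟨δ, hc.1, hc.2, ha, hb⟩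

lemma tendsto_edgeProb :
    Filter.Tendsto (fun n : ℕ => Real.sqrt (Real.log n / n)) Filter.atTop (nhds 0) := by
  have h := (Real.isLittleO_log_id_atTop.tendsto_div_nhds_zero.comp
    tendsto_natCast_atTop_atTop).sqrt
  simpa [Function.comp_def] using h

/-- For fixed `k ≥ 3`, `c ≥ 1` and `p = √(log n / n)`, for every `ε > 0` the probability
that every vertex `v` of `G(k, cn, p)` satisfies
`(1-ε)(cn)^{k-1} p^k ≤ X_v ≤ (1+ε)(cn)^{k-1} p^k` tends to `1` as `n → ∞`. -/
theorem prob_Xv_concentrated (k c : ℕ) (hk : 3 ≤ k) (hc : 1 ≤ c) (ε : ℝ) (hε : 0 < ε) :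
    Filter.Tendsto
      (fun n : ℕ =>
        edgeMeasure k (c * n) (Real.sqrt (Real.log n / n))
          {ω | ∀ v : Fin k × Fin (c * n),
            (1 - ε) * ((c * n : ℕ) : ℝ) ^ (k - 1) * Real.sqrt (Real.log n / n) ^ k
              ≤ (XvCount k (randGraph k (c * n) ω) (randPart k (c * n)) v : ℝ) ∧
            (XvCount k (randGraph k (c * n) ω) (randPart k (c * n)) v : ℝ)
              ≤ (1 + ε) * ((c * n : ℕ) : ℝ) ^ (k - 1) * Real.sqrt (Real.log n / n) ^ k})
      Filter.atTop (nhds 1) := by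
  obtain ⟨m, rfl⟩ : ∃ m, k = m + 1 := ⟨k - 1, by omega⟩
  have hm : 2 ≤ m := by omega
  obtain ⟨δ, hδ0, hδ1, hδup, hδlow⟩ := exists_delta (m + 1) hε
  have hδ' : 0 < 1 - δ := by linarith
  obtain ⟨η, hη⟩ : ∃ η, η = δ ^ 2 * (1 - δ) ^ m / (12 * (1 + δ) ^ (m - 2)) := ⟨_, rfl⟩
  have hη0 : 0 < η := by rw [hη]; positivity
  have hc' : (1 : ℝ) ≤ c := by exact_mod_cast hc
  have hlim : Filter.Tendsto
      (fun n : ℕ => 1 - ENNReal.ofReal (5 * (m + 1) * c ^ 2 / n)) Filter.atTop (nhds 1) := by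
    have h := ENNReal.tendsto_ofReal
      (tendsto_const_div_atTop_nhds_zero_nat (5 * ((m : ℝ) + 1) * c ^ 2))
    have h' := ENNReal.Tendsto.sub (tendsto_const_nhds (x := (1 : ℝ≥0∞))) h
      (Or.inl ENNReal.one_ne_top)
    simpa using h'
  refine tendsto_of_tendsto_of_tendsto_of_le_of_le' hlim tendsto_const_nhds ?_ ?_
  all_goals
    filter_upwards [tendsto_edgeProb.eventually_le_const (zero_lt_one' ℝ),
      tendsto_edgeProb.eventually_le_const (by positivity : 0 < δ ^ 2 / 12),
      tendsto_edgeProb.eventually_le_const (by positivity : 0 < η / 7),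
      Filter.eventually_ge_atTop 2] with n hn1 hn2 hn3 hn4
    have := isProbabilityMeasure_bernoulliM (Real.sqrt_nonneg (Real.log n / n)) hn1
    have : IsProbabilityMeasure
        (edgeMeasure (m + 1) (c * n) (Real.sqrt (Real.log n / n))) := by
      unfold edgeMeasure; infer_instance
  · have hn0 : (2 : ℝ) ≤ n := by exact_mod_cast hn4
    have hlog : 0 < Real.log n := Real.log_pos (by linarith)
    have hp0 : 0 < Real.sqrt (Real.log n / n) := Real.sqrt_pos.mpr (by positivity)
    have hpsq : n * Real.sqrt (Real.log n / n) ^ 2 = Real.log n := by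
      rw [Real.sq_sqrt (by positivity)]
      field_simp
    set p := Real.sqrt (Real.log n / n) with hp
    have hnp : 0 < n * p := by positivity
    -- `log n = n p²`, so each exponent condition is an upper bound on `p`
    have hbad := measure_compl_le (m := m) (N := c * n) (p := p) (δ := δ) (η := η)
      (L := Real.log n) hm (Nat.mul_pos hc (by omega)) hp0 hn1 hδ0 hδ1 hη
      (by
        push_cast
        have h1 : n * p * p ≤ n * p * (δ ^ 2 / 12) := mul_le_mul_of_nonneg_left hn2 hnp.le
        have h2 : δ ^ 2 * (n * p) * 1 ≤ δ ^ 2 * (n * p) * c :=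
          mul_le_mul_of_nonneg_left hc' (by positivity)
        nlinarith)
      (by
        push_cast
        have h1 : n * p * c * p ≤ n * p * c * (η / 7) :=
          mul_le_mul_of_nonneg_left hn3 (by positivity)
        have h2 : n * p ^ 2 * 1 ≤ n * p ^ 2 * c :=
          mul_le_mul_of_nonneg_left hc' (by positivity)
        nlinarith)
      (by
        push_cast
        have h2 : n * p ^ 2 * 1 ≤ n * p ^ 2 * c :=
          mul_le_mul_of_nonneg_left hc' (by positivity)
        nlinarith)
    have hq : 5 * ((m : ℝ) + 1) * ((c * n : ℕ) : ℝ) ^ 2 * Real.exp (-(3 * Real.log n))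
        = 5 * (m + 1) * c ^ 2 / n := by
      have : Real.exp (-(3 * Real.log n)) = ((n : ℝ) ^ 3)⁻¹ := by
        rw [Real.exp_neg, show (3 : ℝ) * Real.log n = ((3 : ℕ) : ℝ) * Real.log n by norm_num,
          Real.exp_nat_mul, Real.exp_log (by linarith)]
      rw [this]
      push_cast
      field_simp
    rw [hq] at hbad
    have hone := prob_add_prob_compl (μ := edgeMeasure (m + 1) (c * n) p)
      (MeasurableSet.of_discrete (s := {ω | ∀ v : Fin (m + 1) × Fin (c * n),
        (1 - δ) ^ (m + 1) * ((c * n : ℕ) : ℝ) ^ m * p ^ (m + 1)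
          ≤ (XvCount (m + 1) (randGraph (m + 1) (c * n) ω) (randPart (m + 1) (c * n)) v : ℝ) ∧
        (XvCount (m + 1) (randGraph (m + 1) (c * n) ω) (randPart (m + 1) (c * n)) v : ℝ)
          ≤ (1 + δ) ^ (m + 1) * ((c * n : ℕ) : ℝ) ^ m * p ^ (m + 1)}))
    refine (tsub_le_iff_right.mpr (hone.symm.le.trans (add_le_add le_rfl hbad))).trans
      (measure_mono fun ω hω v => ?_)
    obtain ⟨hl, hu⟩ := hω v
    rw [Nat.add_sub_cancel]
    refine ⟨le_trans ?_ hl, hu.trans ?_⟩ <;> gcongr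
  · exact prob_le_one
end

section
/- Let k ≥ 3 and r ≥ 2 be fixed integers and set c = 16k²r. For each n, let p = sqrt(log n / n) and consider the random graph G = G(k, cn, p). Then the probability that for every set C ⊆ V(G) with |C| ≤ (k-1)n the number z_C of proper k-cycles of G meeting C satisfies z_C < t_k/(2r) tends to 1 as n → ∞. -/
/-! Write `N = c n` with `c = 16 k² r`. A proper cycle through a vertex `v` is a closed walk
`v, v₁, …, v_{k-1}, v` going once around the parts. Choosing `v₁, …, v_{k-2}` greedily and then
`v_{k-1}` as a common neighbour of `v_{k-2}` and `v`, the number of such walks is controlled by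
out-degrees, of mean `N p`, and by codegrees of vertices two parts apart, of mean
`N p² = c log n` (`card_walks_le`, `le_card_walks`).

Each of these quantities counts how many of `N` independent events occur, so a Chernoff bound
(`chernoff_count`) puts it within a factor `1 ± 1 / k` of its mean except with probability at most
`2 exp (-c log n / (4 k²)) = 2 n ^ (-4 r)`. As there are only `O(n ^ 2)` of them, all are
concentrated simultaneously with probability tending to `1` (`measure_not_isDegreeRegular_le`,
`failure_bound`).

When they are, with `M = (N p) ^ (k - 2) N p²`,
`z_C ≤ (k - 1) n (1 + 1 / k) ^ (k - 1) M` and `t_k ≥ c n (1 - 1 / k) ^ (k - 1) M`, and the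
conclusion reduces to `(k - 1) (1 + 1 / k) ^ (k - 1) < 8 k² (1 - 1 / k) ^ (k - 1)`
(`compound_error`), which holds because `e ^ 2 < 8`.
-/

open Finset MeasureTheory
open scoped Classical ENNReal

/-! ### Counting walks -/

/-- The sequence `a, g 0, …, g (m - 1), b, b, …`. -/
def walkSeq {α : Type*} {m : ℕ} (a b : α) (g : Fin m → α) : ℕ → α
  | 0 => a
  | t + 1 => if h : t < m then g ⟨t, h⟩ else b

/-- The interior vertex sequences `g` of walks `a, g 0, …, g (m - 1), b` whose `t`-th step is an
edge of the bipartite relation `E (j + t)`. -/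
noncomputable def walks {α : Type*} [Fintype α] (E : ℕ → α → α → Prop) (m j : ℕ) (a b : α) :
    Finset (Fin m → α) :=
  univ.filter fun g => ∀ t < m + 1, E (j + t) (walkSeq a b g t) (walkSeq a b g (t + 1))

lemma walkSeq_cons {α : Type*} {m : ℕ} (a b a' : α) (g : Fin m → α) (t : ℕ) :
    walkSeq a b (Fin.cons a' g : Fin (m + 1) → α) (t + 1) = walkSeq a' b g t := by
  cases t with
  | zero => simp [walkSeq]
  | succ t =>
    by_cases h : t < m
    · have : (⟨t + 1, by omega⟩ : Fin (m + 1)) = Fin.succ ⟨t, h⟩ := rfl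
      simp only [walkSeq, h, dif_pos, Nat.add_lt_add_right h 1, this, Fin.cons_succ]
    · simp [walkSeq, h]

section Walks

variable {α : Type*} [Fintype α] (E : ℕ → α → α → Prop)

lemma cons_mem_walks {m j : ℕ} {a b a' : α} {g : Fin m → α} :
    (Fin.cons a' g : Fin (m + 1) → α) ∈ walks E (m + 1) j a b ↔
      E j a a' ∧ g ∈ walks E m (j + 1) a' b := by
  simp only [walks, mem_filter, mem_univ, true_and]
  constructor
  · intro h
    refine ⟨by simpa [walkSeq] using h 0 (by omega), fun t ht => ?_⟩
    have := h (t + 1) (by omega)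
    rwa [walkSeq_cons, walkSeq_cons, show j + (t + 1) = j + 1 + t by ring] at this
  · rintro ⟨h0, h⟩ t ht
    cases t with
    | zero => simpa [walkSeq] using h0
    | succ t =>
      rw [walkSeq_cons, walkSeq_cons, show j + (t + 1) = j + 1 + t by ring]
      exact h t (by omega)

lemma card_walks_succ (m j : ℕ) (a b : α) :
    (walks E (m + 1) j a b).card =
      ∑ a' ∈ univ.filter (fun a' => E j a a'), (walks E m (j + 1) a' b).card := by
  rw [← card_sigma]
  symm
  refine card_bij (fun x _ => (Fin.cons x.1 x.2 : Fin (m + 1) → α)) ?_ ?_ ?_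
  · rintro ⟨a', g⟩ h
    simpa [cons_mem_walks] using h
  · rintro ⟨a', g⟩ _ ⟨a'', g'⟩ _ h
    have := Fin.cons_injective2 h
    simp only at this
    obtain ⟨rfl, rfl⟩ := this
    rfl
  · intro f hf
    refine ⟨⟨f 0, Fin.tail f⟩, ?_, by simp⟩
    rw [← Fin.cons_self_tail f, cons_mem_walks] at hf
    simpa using hf

lemma card_walks_one (j : ℕ) (a b : α) :
    (walks E 1 j a b).card = (univ.filter (fun w => E j a w ∧ E (j + 1) w b)).card := by
  rw [card_walks_succ, ← filter_filter, card_filter]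
  refine sum_congr rfl fun w _ => ?_
  by_cases h : E (j + 1) w b <;> simp [walks, walkSeq, h]

/-- Walks are counted by choosing all interior vertices but the last one greedily, the last one
being a common neighbour of its predecessor and of the endpoint. -/
lemma card_walks_le {D Q : ℝ} (hD0 : 0 ≤ D) (hQ0 : 0 ≤ Q)
    (hD : ∀ j a, ((univ.filter (fun b => E j a b)).card : ℝ) ≤ D)
    (hQ : ∀ j a b, ((univ.filter (fun w => E j a w ∧ E (j + 1) w b)).card : ℝ) ≤ Q)
    (m j : ℕ) (a b : α) : ((walks E (m + 1) j a b).card : ℝ) ≤ D ^ m * Q := by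
  induction m generalizing j a with
  | zero => simpa [card_walks_one] using hQ j a b
  | succ m ih =>
    rw [card_walks_succ, Nat.cast_sum]
    calc _ ≤ ∑ a' ∈ univ.filter (fun a' => E j a a'), D ^ m * Q := sum_le_sum fun a' _ => ih _ _
      _ = ((univ.filter (fun b => E j a b)).card : ℝ) * (D ^ m * Q) := by simp
      _ ≤ D * (D ^ m * Q) := by gcongr; exact hD j a
      _ = _ := by ring

lemma le_card_walks {D Q : ℝ} (hD0 : 0 ≤ D) (hQ0 : 0 ≤ Q)
    (hD : ∀ j a, D ≤ ((univ.filter (fun b => E j a b)).card : ℝ))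
    (hQ : ∀ j a b, Q ≤ ((univ.filter (fun w => E j a w ∧ E (j + 1) w b)).card : ℝ))
    (m j : ℕ) (a b : α) : D ^ m * Q ≤ ((walks E (m + 1) j a b).card : ℝ) := by
  induction m generalizing j a with
  | zero => simpa [card_walks_one] using hQ j a b
  | succ m ih =>
    rw [card_walks_succ, Nat.cast_sum]
    calc D ^ (m + 1) * Q = D * (D ^ m * Q) := by ring
      _ ≤ ((univ.filter (fun b => E j a b)).card : ℝ) * (D ^ m * Q) := by gcongr; exact hD j a
      _ = ∑ a' ∈ univ.filter (fun a' => E j a a'), D ^ m * Q := by simp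
      _ ≤ _ := sum_le_sum fun a' _ => ih _ _

end Walks

/-! ### Proper cycles as closed walks -/

/-- The edges of the sample point `ω` from part `j` to part `j + 1`, with `j` read modulo `k`. -/
def edgeRel (k N : ℕ) (hk : 3 ≤ k) (ω : Fin k × Fin N × Fin N → Bool) (j : ℕ) (a b : Fin N) :
    Prop :=
  ω (⟨j % k, Nat.mod_lt _ (by omega)⟩, a, b) = true

lemma mod_ne_succ_mod {k : ℕ} (hk : 3 ≤ k) (j : ℕ) : j % k ≠ (j + 1) % k := by
  intro h
  have h' : j + 0 ≡ j + 1 [MOD k] := h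
  have := Nat.ModEq.add_left_cancel' j h'
  have := (Nat.modEq_zero_iff_dvd).1 this.symm
  have := Nat.le_of_dvd (by norm_num) this
  omega

lemma randGraph_adj {k N : ℕ} (hk : 3 ≤ k) (ω : Fin k × Fin N × Fin N → Bool)
    (u v : Fin k × Fin N) (j : ℕ) (hu : (u.1 : ℕ) = j % k) (hv : (v.1 : ℕ) = (j + 1) % k) :
    (randGraph k N ω).Adj u v ↔ edgeRel k N hk ω j u.2 v.2 := by
  obtain ⟨⟨u1, hu1⟩, u2⟩ := u
  obtain ⟨⟨v1, hv1⟩, v2⟩ := v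
  simp only at hu hv
  subst hu hv
  have h1 : (j % k + 1) % k = (j + 1) % k := by simp
  have h2 : (j + 1 + 1) % k ≠ j % k := by
    intro h
    have h' : (j + 1 + 1) ≡ j + 0 [MOD k] := h
    rw [add_assoc] at h'
    have := Nat.ModEq.add_left_cancel' j h'
    have := (Nat.modEq_zero_iff_dvd).1 this
    have := Nat.le_of_dvd (by norm_num) this
    omega
  have h3 : j % k ≠ (j + 1) % k := mod_ne_succ_mod hk j
  simp [randGraph, edgeRel, h2, h3]

/-- Every proper cycle through `v` is traced out by a closed walk based at `v`. -/
lemma card_cycles_through_le {k N : ℕ} (hk : 3 ≤ k) (ω : Fin k × Fin N × Fin N → Bool)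
    (v : Fin k × Fin N) :
    ((properCycles k (randGraph k N ω) (randPart k N)).filter (fun S => v ∈ S)).card ≤
      (walks (edgeRel k N hk ω) (k - 1) v.1 v.2 v.2).card := by
  refine card_le_card_of_surjOn (fun g => (range k).image fun t =>
    ((⟨(v.1 + t) % k, Nat.mod_lt _ (by omega)⟩ : Fin k), walkSeq v.2 v.2 g t)) ?_
  intro S hS
  simp only [properCycles, coe_filter, mem_filter, mem_univ, true_and, Set.mem_ofPred_eq] at hS
  obtain ⟨⟨w, rfl, hP, hA⟩, hv⟩ := hS
  simp only [mem_image] at hv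
  obtain ⟨i, hi, rfl⟩ := hv
  have hi := mem_range.1 hi
  have hmod : ∀ t, t % k < k := fun t => Nat.mod_lt _ (by omega)
  have hPi : ((w i).1 : ℕ) = i := hP i hi
  have hseq : ∀ t ≤ k, walkSeq (w i).2 (w i).2
      (fun s : Fin (k - 1) => (w ((i + (s + 1)) % k)).2) t = (w ((i + t) % k)).2 := by
    intro t ht
    cases t with
    | zero => simp [walkSeq, Nat.mod_eq_of_lt hi]
    | succ t =>
      by_cases h : t < k - 1
      · simp [walkSeq, h]
      · have : t + 1 = k := by omega
        simp [walkSeq, h, this, Nat.mod_eq_of_lt hi]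
  refine ⟨fun s => (w ((i + (s + 1)) % k)).2, ?_, ?_⟩
  · simp only [walks, coe_filter, mem_univ, true_and, Set.mem_ofPred_eq]
    intro t ht
    rw [hseq t (by omega), hseq (t + 1) (by omega), hPi]
    rw [← randGraph_adj hk ω (w ((i + t) % k)) (w ((i + (t + 1)) % k)) (i + t)
      (hP _ (hmod _)) (hP _ (hmod _))]
    have := hA _ (hmod (i + t))
    rwa [Nat.mod_add_mod] at this
  · ext x
    simp only [mem_image, mem_range, hPi]
    constructor
    · rintro ⟨t, ht, rfl⟩
      refine ⟨(i + t) % k, hmod _, ?_⟩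
      rw [hseq t ht.le]
      exact Prod.ext (Fin.ext (hP _ (hmod _))) rfl
    · rintro ⟨s, hs, rfl⟩
      have h : (i + (s + k - i) % k) % k = s := by
        rw [Nat.add_mod_mod, show i + (s + k - i) = s + k by omega]
        simp [Nat.mod_eq_of_lt hs]
      refine ⟨(s + k - i) % k, hmod _, ?_⟩
      rw [hseq _ (hmod _).le]
      exact Prod.ext (Fin.ext (by simp only [h]; exact (hP _ hs).symm)) (by simp only [h])

/-- Distinct closed walks based in part `0` trace out distinct proper cycles. -/
lemma sum_card_walks_le {k N : ℕ} (hk : 3 ≤ k) (ω : Fin k × Fin N × Fin N → Bool) :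
    ∑ v : Fin N, (walks (edgeRel k N hk ω) (k - 1) 0 v v).card ≤
      tkCount k (randGraph k N ω) (randPart k N) := by
  rw [← card_sigma]
  have hmod : ∀ t, t % k < k := fun t => Nat.mod_lt _ (by omega)
  have hseqk : ∀ (v : Fin N) (g : Fin (k - 1) → Fin N) (t), t < k →
      walkSeq v v g ((t + 1) % k) = walkSeq v v g (t + 1) := by
    intro v g t ht
    rcases Nat.lt_or_ge (t + 1) k with h | h
    · rw [Nat.mod_eq_of_lt h]
    · obtain rfl : k = t + 1 := by omega
      simp [walkSeq]
  refine card_le_card_of_injOn (fun x => (range k).image fun t =>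
    ((⟨t % k, hmod t⟩ : Fin k), walkSeq x.1 x.1 x.2 t)) ?_ ?_
  · rintro ⟨v, g⟩ h
    simp only [walks, coe_sigma, Set.mem_sigma_iff, coe_filter, mem_univ, true_and,
      Set.mem_ofPred_eq, coe_univ, Set.mem_univ] at h
    simp only [properCycles, coe_filter, mem_univ, true_and, Set.mem_ofPred_eq]
    refine ⟨fun t => ((⟨t % k, hmod t⟩ : Fin k), walkSeq v v g t), by ext; simp,
      fun i hi => Nat.mod_eq_of_lt hi, fun i hi => ?_⟩
    rw [randGraph_adj hk ω _ _ i rfl (by simp)]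
    simp only [hseqk v g i hi]
    have := h i (by omega)
    rwa [zero_add] at this
  · rintro ⟨v, g⟩ _ ⟨v', g'⟩ _ h
    have key : ∀ t < k, walkSeq v v g t = walkSeq v' v' g' t := by
      intro t ht
      have hm : ((⟨t % k, hmod t⟩ : Fin k), walkSeq v v g t) ∈ (range k).image fun t =>
        ((⟨t % k, hmod t⟩ : Fin k), walkSeq v' v' g' t) := by
        have h := h
        beta_reduce at h
        rw [← h]
        exact mem_image.2 ⟨t, mem_range.2 ht, rfl⟩
      obtain ⟨s, hs, he⟩ := mem_image.1 hm
      have hs := mem_range.1 hs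
      obtain ⟨h1, h2⟩ := Prod.ext_iff.1 he
      have h1 := Fin.ext_iff.1 h1
      simp only [Nat.mod_eq_of_lt hs, Nat.mod_eq_of_lt ht] at h1
      subst h1
      exact h2.symm
    have h0 : v = v' := key 0 (by omega)
    have hg : g = g' := by
      ext1 s
      simpa [walkSeq] using key (s + 1) (by omega)
    rw [h0, hg]

lemma zCount_le {k N : ℕ} (hk : 3 ≤ k) (ω : Fin k × Fin N × Fin N → Bool)
    (C : Finset (Fin k × Fin N)) :
    zCount k (randGraph k N ω) (randPart k N) C ≤
      ∑ v ∈ C, (walks (edgeRel k N hk ω) (k - 1) v.1 v.2 v.2).card := by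
  calc _ ≤ (C.biUnion fun v =>
        (properCycles k (randGraph k N ω) (randPart k N)).filter (fun S => v ∈ S)).card := by
        refine card_le_card fun S hS => ?_
        simp only [mem_filter] at hS
        obtain ⟨h1, u, h2, h3⟩ := hS
        exact mem_biUnion.2 ⟨u, h3, mem_filter.2 ⟨h1, h2⟩⟩
    _ ≤ _ := card_biUnion_le
    _ ≤ _ := sum_le_sum fun v _ => card_cycles_through_le hk ω v

/-! ### A Chernoff bound -/

open ProbabilityTheory in
/-- Moment generating function of the number of independent events that occur. -/
lemma mgf_count_le {Ω : Type*} [MeasurableSpace Ω] (μ : Measure Ω) [IsProbabilityMeasure μ]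
    {N : ℕ} (A : Fin N → Set Ω) (hA : ∀ w, MeasurableSet (A w)) (hind : iIndepSet A μ) (q : ℝ)
    (hq : ∀ w, μ.real (A w) = q) (t : ℝ) :
    mgf (fun ω => ((univ.filter (fun w => ω ∈ A w)).card : ℝ)) μ t ≤
      Real.exp (N * q * (Real.exp t - 1)) := by
  have hX : (fun ω => ((univ.filter (fun w => ω ∈ A w)).card : ℝ)) =
      ∑ w, (A w).indicator (fun _ => (1 : ℝ)) := by
    ext ω
    simp [Finset.sum_apply, Set.indicator_apply]
  have hm : ∀ w, mgf ((A w).indicator (fun _ => (1 : ℝ))) μ t = 1 + q * (Real.exp t - 1) := by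
    intro w
    have h1 : (fun ω => Real.exp (t * (A w).indicator (fun _ => (1 : ℝ)) ω)) =
        fun ω => 1 + (A w).indicator (fun _ => Real.exp t - 1) ω := by
      ext ω
      by_cases h : ω ∈ A w <;> simp [h]
    rw [mgf, h1, integral_add (integrable_const _) ((integrable_const _).indicator (hA w)),
      integral_indicator_const _ (hA w), hq]
    simp
  rw [hX, (hind.iIndepFun_indicator (β := ℝ)).mgf_sum
    (fun w => measurable_const.indicator (hA w))]
  simp only [hm, prod_const, card_univ, Fintype.card_fin]
  have h0 : 0 ≤ 1 + q * (Real.exp t - 1) ∨ N = 0 := by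
    rcases Nat.eq_zero_or_pos N with h | h
    · exact Or.inr h
    · left
      rw [← hm ⟨0, h⟩]
      exact mgf_nonneg
  rcases h0 with h0 | rfl
  · calc _ ≤ Real.exp (q * (Real.exp t - 1)) ^ N := by
          gcongr
          linarith [Real.add_one_le_exp (q * (Real.exp t - 1))]
      _ = _ := by rw [← Real.exp_nat_mul]; ring_nf
  · simp

lemma exp_sub_one_le {t : ℝ} (ht : |t| ≤ 1) : Real.exp t - 1 ≤ t + t ^ 2 := by
  have := (abs_le.1 (Real.abs_exp_sub_one_sub_id_le ht)).2
  linarith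

open ProbabilityTheory in
/-- Two-sided Chernoff bound for the number of independent equiprobable events that occur. -/
lemma chernoff_count {Ω : Type*} [MeasurableSpace Ω] [DiscreteMeasurableSpace Ω] [Finite Ω]
    (μ : Measure Ω) [IsProbabilityMeasure μ]
    {N : ℕ} (A : Fin N → Set Ω) (hind : iIndepSet A μ) (q : ℝ)
    (hq : ∀ w, μ.real (A w) = q) (hq0 : 0 ≤ q) {ε : ℝ} (hε0 : 0 ≤ ε) (hε1 : ε ≤ 1) :
    μ.real {ω | ¬ ((1 - ε) * (N * q) ≤ ((univ.filter (fun w => ω ∈ A w)).card : ℝ) ∧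
        ((univ.filter (fun w => ω ∈ A w)).card : ℝ) ≤ (1 + ε) * (N * q))} ≤
      2 * Real.exp (-(ε ^ 2 * (N * q) / 4)) := by
  set X : Ω → ℝ := fun ω => ((univ.filter (fun w => ω ∈ A w)).card : ℝ) with hX
  have hA : ∀ w, MeasurableSet (A w) := fun w => .of_discrete
  have hmu : (0 : ℝ) ≤ N * q := by positivity
  have hint : ∀ t : ℝ, Integrable (fun ω => Real.exp (t * X ω)) μ := fun t => .of_finite
  have hsub : {ω | ¬ ((1 - ε) * (N * q) ≤ X ω ∧ X ω ≤ (1 + ε) * (N * q))} ⊆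
      {ω | (1 + ε) * (N * q) ≤ X ω} ∪ {ω | X ω ≤ (1 - ε) * (N * q)} := by
    intro ω h
    simp only [Set.mem_ofPred_eq, not_and_or, not_le, Set.mem_union] at h ⊢
    exact h.symm.imp le_of_lt le_of_lt
  -- With `exp t - 1 ≤ t + t ^ 2`, the best exponents are attained at `t = ε / 2` and `t = -ε / 2`.
  have h1 : μ.real {ω | (1 + ε) * (N * q) ≤ X ω} ≤ Real.exp (-(ε ^ 2 * (N * q) / 4)) := by
    refine (measure_ge_le_exp_mul_mgf _ (t := ε / 2) (by positivity) (hint _)).trans ?_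
    refine (mul_le_mul_of_nonneg_left (mgf_count_le μ A hA hind q hq _) (Real.exp_nonneg _)).trans ?_
    rw [← Real.exp_add, Real.exp_le_exp]
    have := mul_le_mul_of_nonneg_left
      (exp_sub_one_le (t := ε / 2) (by rw [abs_le]; constructor <;> linarith)) hmu
    nlinarith
  have h2 : μ.real {ω | X ω ≤ (1 - ε) * (N * q)} ≤ Real.exp (-(ε ^ 2 * (N * q) / 4)) := by
    refine (measure_le_le_exp_mul_mgf _ (t := -(ε / 2)) (by linarith) (hint _)).trans ?_
    refine (mul_le_mul_of_nonneg_left (mgf_count_le μ A hA hind q hq _) (Real.exp_nonneg _)).trans ?_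
    rw [← Real.exp_add, Real.exp_le_exp]
    have := mul_le_mul_of_nonneg_left
      (exp_sub_one_le (t := -(ε / 2)) (by rw [abs_le]; constructor <;> linarith)) hmu
    nlinarith
  calc _ ≤ _ := measureReal_mono hsub
    _ ≤ _ := measureReal_union_le _ _
    _ ≤ _ := by linarith

/-! ### Concentration of degrees and codegrees -/

lemma isProbabilityMeasure_bernoulliM_s15 {p : ℝ} (h0 : 0 ≤ p) (h1 : p ≤ 1) :
    IsProbabilityMeasure (bernoulliM p) := by
  constructor
  simp [bernoulliM, ← ENNReal.ofReal_add h0 (sub_nonneg.2 h1)]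

lemma isProbabilityMeasure_edgeMeasure (k N : ℕ) {p : ℝ} (h0 : 0 ≤ p) (h1 : p ≤ 1) :
    IsProbabilityMeasure (edgeMeasure k N p) := by
  have := isProbabilityMeasure_bernoulliM_s15 h0 h1
  unfold edgeMeasure
  infer_instance

/-- A prescribed set of potential edges is present with probability `p` to its size. -/
lemma edgeMeasure_cylinder (k N : ℕ) {p : ℝ} (h0 : 0 ≤ p) (h1 : p ≤ 1)
    (T : Finset (Fin k × Fin N × Fin N)) :
    edgeMeasure k N p {ω | ∀ e ∈ T, ω e = true} = ENNReal.ofReal p ^ T.card := by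
  have := isProbabilityMeasure_bernoulliM_s15 h0 h1
  have hs : {ω : Fin k × Fin N × Fin N → Bool | ∀ e ∈ T, ω e = true} =
      Set.univ.pi (fun e => if e ∈ T then {true} else Set.univ) := by
    ext ω
    simp only [Set.mem_ofPred_eq, Set.mem_pi, Set.mem_univ, true_imp_iff]
    refine forall_congr' fun e => ?_
    by_cases h : e ∈ T <;> simp [h]
  have ht : bernoulliM p {true} = ENNReal.ofReal p := by simp [bernoulliM]
  rw [hs, edgeMeasure, Measure.pi_pi]
  simp only [apply_ite, ht, measure_univ, prod_ite, prod_const, one_pow, mul_one]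
  simp

open ProbabilityTheory in
/-- If `T w` (`w < N`) are pairwise disjoint sets of `d` potential edges, the number of `w` for
which all of `T w` is present is concentrated around `N p ^ d`. -/
lemma edgeMeasure_chernoff (k N d : ℕ) {p : ℝ} (h0 : 0 ≤ p) (h1 : p ≤ 1)
    (T : Fin N → Finset (Fin k × Fin N × Fin N)) (hT : ∀ w w', w ≠ w' → Disjoint (T w) (T w'))
    (hd : ∀ w, (T w).card = d) {ε : ℝ} (hε0 : 0 ≤ ε) (hε1 : ε ≤ 1) :
    (edgeMeasure k N p).real
      {ω | ¬ ((1 - ε) * (N * p ^ d) ≤ ((univ.filter (fun w => ∀ e ∈ T w, ω e = true)).card : ℝ) ∧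
        ((univ.filter (fun w => ∀ e ∈ T w, ω e = true)).card : ℝ) ≤ (1 + ε) * (N * p ^ d))} ≤
      2 * Real.exp (-(ε ^ 2 * (N * p ^ d) / 4)) := by
  have := isProbabilityMeasure_edgeMeasure k N h0 h1
  have hind : iIndepSet (fun w => {ω : Fin k × Fin N × Fin N → Bool | ∀ e ∈ T w, ω e = true})
      (edgeMeasure k N p) := by
    rw [iIndepSet_iff_meas_biInter (fun _ => .of_discrete)]
    intro s
    have hs : (⋂ w ∈ s, {ω : Fin k × Fin N × Fin N → Bool | ∀ e ∈ T w, ω e = true}) =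
        {ω | ∀ e ∈ s.biUnion T, ω e = true} := by
      ext ω
      simp only [Set.mem_iInter, Set.mem_ofPred_eq, mem_biUnion]
      grind
    rw [hs, edgeMeasure_cylinder k N h0 h1, card_biUnion (fun w _ w' _ h => hT w w' h)]
    simp only [edgeMeasure_cylinder k N h0 h1]
    rw [prod_pow_eq_pow_sum]
  have hq : ∀ w, (edgeMeasure k N p).real
      {ω : Fin k × Fin N × Fin N → Bool | ∀ e ∈ T w, ω e = true} = p ^ d := by
    intro w
    rw [measureReal_def, edgeMeasure_cylinder k N h0 h1, hd]
    simp [h0]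
  have h := chernoff_count (edgeMeasure k N p) _ hind (p ^ d) hq (by positivity) hε0 hε1
  simp only [Set.mem_ofPred_eq] at h
  convert h

/-- All out-degrees and all codegrees of vertices two parts apart are within a factor `1 ± ε` of
their means. -/
def IsDegreeRegular (k N : ℕ) (hk : 3 ≤ k) (p ε : ℝ) (ω : Fin k × Fin N × Fin N → Bool) : Prop :=
  (∀ j a, (1 - ε) * (N * p) ≤ ((univ.filter (fun b => edgeRel k N hk ω j a b)).card : ℝ) ∧
    ((univ.filter (fun b => edgeRel k N hk ω j a b)).card : ℝ) ≤ (1 + ε) * (N * p)) ∧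
  ∀ j a b, (1 - ε) * (N * p ^ 2) ≤
      ((univ.filter (fun w => edgeRel k N hk ω j a w ∧ edgeRel k N hk ω (j + 1) w b)).card : ℝ) ∧
    ((univ.filter (fun w => edgeRel k N hk ω j a w ∧ edgeRel k N hk ω (j + 1) w b)).card : ℝ) ≤
      (1 + ε) * (N * p ^ 2)

lemma measure_not_degree_le {k N : ℕ} (hk : 3 ≤ k) {p ε : ℝ} (h0 : 0 ≤ p) (h1 : p ≤ 1)
    (hε0 : 0 ≤ ε) (hε1 : ε ≤ 1) (j : ℕ) (a : Fin N) :
    (edgeMeasure k N p).real {ω | ¬ (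
      (1 - ε) * (N * p) ≤ ((univ.filter (fun b => edgeRel k N hk ω j a b)).card : ℝ) ∧
      ((univ.filter (fun b => edgeRel k N hk ω j a b)).card : ℝ) ≤ (1 + ε) * (N * p))} ≤
      2 * Real.exp (-(ε ^ 2 * (N * p) / 4)) := by
  have hmod : ∀ t, t % k < k := fun t => Nat.mod_lt _ (by omega)
  have h := edgeMeasure_chernoff k N 1 h0 h1
    (fun w => {(⟨j % k, hmod j⟩, a, w)}) (by simp) (by simp) hε0 hε1
  simp only [mem_singleton, forall_eq, pow_one] at h
  convert h <;> rfl

lemma measure_not_codegree_le {k N : ℕ} (hk : 3 ≤ k) {p ε : ℝ} (h0 : 0 ≤ p) (h1 : p ≤ 1)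
    (hε0 : 0 ≤ ε) (hε1 : ε ≤ 1) (j : ℕ) (a b : Fin N) :
    (edgeMeasure k N p).real {ω | ¬ (
      (1 - ε) * (N * p ^ 2) ≤
      ((univ.filter (fun w => edgeRel k N hk ω j a w ∧ edgeRel k N hk ω (j + 1) w b)).card : ℝ) ∧
      ((univ.filter (fun w => edgeRel k N hk ω j a w ∧ edgeRel k N hk ω (j + 1) w b)).card : ℝ) ≤
      (1 + ε) * (N * p ^ 2))} ≤
      2 * Real.exp (-(ε ^ 2 * (N * p ^ 2) / 4)) := by
  have hmod : ∀ t, t % k < k := fun t => Nat.mod_lt _ (by omega)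
  have h3 : j % k ≠ (j + 1) % k := mod_ne_succ_mod hk j
  have h := edgeMeasure_chernoff k N 2 h0 h1
    (fun w => {(⟨j % k, hmod j⟩, a, w), (⟨(j + 1) % k, hmod (j + 1)⟩, w, b)})
    (by
      intro w w' hw
      simp [hw.symm, h3, h3.symm])
    (by
      intro w
      rw [card_pair]
      simp [h3]) hε0 hε1
  simp only [mem_insert, mem_singleton, forall_eq_or_imp, forall_eq] at h
  convert h <;> rfl

/-- Union bound over all vertices and all pairs of vertices two parts apart. -/
lemma measure_not_isDegreeRegular_le {k N : ℕ} (hk : 3 ≤ k) {p ε : ℝ} (h0 : 0 ≤ p) (h1 : p ≤ 1)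
    (hε0 : 0 ≤ ε) (hε1 : ε ≤ 1) :
    (edgeMeasure k N p).real {ω | ¬ IsDegreeRegular k N hk p ε ω} ≤
      4 * k * N ^ 2 * Real.exp (-(ε ^ 2 * (N * p ^ 2) / 4)) := by
  have := isProbabilityMeasure_edgeMeasure k N h0 h1
  have hsub : {ω | ¬ IsDegreeRegular k N hk p ε ω} ⊆
      (⋃ x : Fin k × Fin N, {ω | ¬ (
        (1 - ε) * (N * p) ≤ ((univ.filter (fun b => edgeRel k N hk ω x.1 x.2 b)).card : ℝ) ∧
        ((univ.filter (fun b => edgeRel k N hk ω x.1 x.2 b)).card : ℝ) ≤ (1 + ε) * (N * p))}) ∪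
      ⋃ x : Fin k × Fin N × Fin N, {ω | ¬ (
        (1 - ε) * (N * p ^ 2) ≤ ((univ.filter (fun w => edgeRel k N hk ω x.1 x.2.1 w ∧
          edgeRel k N hk ω (x.1 + 1) w x.2.2)).card : ℝ) ∧
        ((univ.filter (fun w => edgeRel k N hk ω x.1 x.2.1 w ∧
          edgeRel k N hk ω (x.1 + 1) w x.2.2)).card : ℝ) ≤ (1 + ε) * (N * p ^ 2))} := by
    intro ω hω
    by_contra hcon
    simp only [Set.mem_union, Set.mem_iUnion, Set.mem_ofPred_eq, not_or, not_exists, not_not]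
      at hcon
    have e1 : ∀ j, edgeRel k N hk ω (j % k) = edgeRel k N hk ω j := by
      intro j; ext; simp [edgeRel]
    have e2 : ∀ j, edgeRel k N hk ω (j % k + 1) = edgeRel k N hk ω (j + 1) := by
      intro j; ext; simp [edgeRel]
    refine hω ⟨fun j a => ?_, fun j a b => ?_⟩
    · have h := hcon.1 (⟨j % k, Nat.mod_lt _ (by omega)⟩, a)
      dsimp only at h
      rwa [e1] at h
    · have h := hcon.2 (⟨j % k, Nat.mod_lt _ (by omega)⟩, a, b)
      dsimp only at h
      rwa [e1, e2] at h
  -- As `p ≤ 1`, the degree tails are at most the codegree tails.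
  have hexp : Real.exp (-(ε ^ 2 * (N * p) / 4)) ≤ Real.exp (-(ε ^ 2 * (N * p ^ 2) / 4)) := by
    have : p ^ 2 ≤ p := by nlinarith
    gcongr
  have hN : (N : ℝ) ≤ (N : ℝ) ^ 2 := by exact_mod_cast Nat.le_self_pow (by norm_num) N
  set x := Real.exp (-(ε ^ 2 * (N * p ^ 2) / 4))
  have hx : 0 ≤ x := Real.exp_nonneg _
  refine (measureReal_mono hsub).trans ((measureReal_union_le _ _).trans ?_)
  refine (add_le_add (measureReal_iUnion_fintype_le _) (measureReal_iUnion_fintype_le _)).trans ?_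
  calc _ ≤ (∑ _y : Fin k × Fin N, 2 * x) + ∑ _y : Fin k × Fin N × Fin N, 2 * x :=
        add_le_add
          (sum_le_sum fun y _ => (measure_not_degree_le hk h0 h1 hε0 hε1 _ _).trans (by linarith))
          (sum_le_sum fun y _ => measure_not_codegree_le hk h0 h1 hε0 hε1 _ _ _)
    _ = 2 * k * N * x + 2 * k * N ^ 2 * x := by simp; ring
    _ ≤ 2 * k * N ^ 2 * x + 2 * k * N ^ 2 * x := by gcongr
    _ = _ := by ring

/-! ### Comparing the counts -/

/-- With `ε = 1 / k`, the `k - 1` upper errors compound to at most `e` and the `k - 1` lower errors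
to at least `1 / e`; the constant `16` in `c` leaves room because `e ^ 2 < 8`. -/
lemma compound_error (k : ℕ) (hk : 3 ≤ k) :
    ((k : ℝ) - 1) * (1 + 1 / k) ^ (k - 1) < 8 * k ^ 2 * (1 - 1 / k) ^ (k - 1) := by
  obtain ⟨m, rfl⟩ : ∃ m, k = m + 1 := ⟨k - 1, by omega⟩
  have hm : (0 : ℝ) < m := by exact_mod_cast (by omega : 0 < m)
  simp only [Nat.add_sub_cancel, Nat.cast_add, Nat.cast_one]
  have he : Real.exp 1 ^ 2 < 8 := by
    have := Real.exp_one_lt_d9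
    have := Real.exp_pos 1
    nlinarith
  have hpow : ∀ x : ℝ, 0 ≤ x → x ≤ 1 / m → (1 + x) ^ m ≤ Real.exp 1 := by
    intro x hx hxm
    calc (1 + x) ^ m ≤ Real.exp (1 / m) ^ m := by
          gcongr
          linarith [Real.add_one_le_exp (1 / m : ℝ)]
      _ = Real.exp 1 := by rw [← Real.exp_nat_mul]; field_simp
  have h1 : (1 + 1 / ((m : ℝ) + 1)) ^ m ≤ Real.exp 1 :=
    hpow _ (by positivity) (by gcongr; linarith)
  have h2 : (1 + 1 / (m : ℝ)) ^ m ≤ Real.exp 1 := hpow _ (by positivity) le_rfl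
  have h3 : (1 - 1 / ((m : ℝ) + 1)) ^ m * (1 + 1 / (m : ℝ)) ^ m = 1 := by
    rw [← mul_pow]
    have : (1 - 1 / ((m : ℝ) + 1)) * (1 + 1 / (m : ℝ)) = 1 := by field_simp; ring
    rw [this, one_pow]
  set A := (1 + 1 / ((m : ℝ) + 1)) ^ m
  set B := (1 + 1 / (m : ℝ)) ^ m
  set C := (1 - 1 / ((m : ℝ) + 1)) ^ m
  have hA : 0 < A := by positivity
  have hB : 0 < B := by positivity
  have hC : 0 < C := by
    by_contra h
    nlinarith
  have hAB : A * B < 8 := by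
    calc A * B ≤ Real.exp 1 * Real.exp 1 := by gcongr
      _ < 8 := by linarith [he, sq (Real.exp 1)]
  have hAC : A < 8 * C := by
    calc A = A * B * C := by linear_combination -A * h3
      _ < 8 * C := by gcongr
  calc ((m : ℝ) + 1 - 1) * A < m * (8 * C) := by
        rw [add_sub_cancel_right]
        gcongr
    _ ≤ 8 * (m + 1) ^ 2 * C := by nlinarith [mul_pos hm hC, mul_pos (mul_pos hm hm) hC]

/-- In a regular sample point every vertex lies on at most `((1 + ε) N p) ^ (k - 2) (1 + ε) N p²`
proper cycles, while there are at least `N ((1 - ε) N p) ^ (k - 2) (1 - ε) N p²` of them. -/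
lemma zCount_lt_of_isDegreeRegular {k r n N : ℕ} (hk : 3 ≤ k) (hr : 2 ≤ r) (hn : 0 < n)
    (hN : N = 16 * k ^ 2 * r * n) {p : ℝ} (hp : 0 < p) {ω : Fin k × Fin N × Fin N → Bool}
    (hω : IsDegreeRegular k N hk p (1 / k) ω)
    (C : Finset (Fin k × Fin N)) (hC : C.card ≤ (k - 1) * n) :
    (zCount k (randGraph k N ω) (randPart k N) C : ℝ)
      < (tkCount k (randGraph k N ω) (randPart k N) : ℝ) / (2 * r) := by
  obtain ⟨hdeg, hcodeg⟩ := hω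
  have hk0 : (0 : ℝ) < k := by exact_mod_cast (by omega : 0 < k)
  have hr0 : (0 : ℝ) < r := by exact_mod_cast (by omega : 0 < r)
  have hn0 : (0 : ℝ) < n := by exact_mod_cast hn
  have hNr : (N : ℝ) = 16 * k ^ 2 * r * n := by simp [hN]
  have hN0 : (0 : ℝ) < N := by rw [hNr]; positivity
  have hk1 : (0 : ℝ) ≤ 1 - 1 / k := by
    rw [sub_nonneg, div_le_one hk0]
    exact_mod_cast (by omega : 1 ≤ k)
  obtain ⟨m, hm⟩ : ∃ m, k - 1 = m + 1 := ⟨k - 2, by omega⟩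
  -- `M` is the common mean `(N p) ^ (k - 2) N p²` of the number of closed walks at a vertex.
  set M : ℝ := (N * p) ^ m * (N * p ^ 2) with hM
  have hM0 : 0 < M := by positivity
  have hup : (zCount k (randGraph k N ω) (randPart k N) C : ℝ) ≤
      (((k : ℝ) - 1) * n) * ((1 + 1 / k) ^ (k - 1) * M) := by
    calc (zCount k (randGraph k N ω) (randPart k N) C : ℝ)
        ≤ ∑ v ∈ C, ((walks (edgeRel k N hk ω) (k - 1) v.1 v.2 v.2).card : ℝ) := by
          exact_mod_cast zCount_le hk ω C
      _ ≤ ∑ v ∈ C, (1 + 1 / (k : ℝ)) ^ (k - 1) * M := by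
          refine sum_le_sum fun v _ => ?_
          rw [hm]
          refine (card_walks_le _ (by positivity) (by positivity) (fun j a => (hdeg j a).2)
            (fun j a b => (hcodeg j a b).2) m _ _ _).trans (le_of_eq ?_)
          rw [hM, mul_pow]; ring
      _ = (C.card : ℝ) * ((1 + 1 / (k : ℝ)) ^ (k - 1) * M) := by simp
      _ ≤ _ := by
          gcongr
          calc (C.card : ℝ) ≤ (((k - 1) * n : ℕ) : ℝ) := by exact_mod_cast hC
            _ = _ := by rw [Nat.cast_mul, Nat.cast_sub (by omega)]; simp
  have hlow : (N : ℝ) * ((1 - 1 / k) ^ (k - 1) * M) ≤ tkCount k (randGraph k N ω) (randPart k N) := by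
    calc (N : ℝ) * ((1 - 1 / k) ^ (k - 1) * M)
        = ∑ _v : Fin N, (1 - 1 / (k : ℝ)) ^ (k - 1) * M := by simp
      _ ≤ ∑ v : Fin N, ((walks (edgeRel k N hk ω) (k - 1) 0 v v).card : ℝ) := by
          refine sum_le_sum fun v _ => ?_
          rw [hm]
          refine (le_of_eq ?_).trans (le_card_walks _ (by positivity) (by positivity)
            (fun j a => (hdeg j a).1) (fun j a b => (hcodeg j a b).1) m _ _ _)
          rw [hM, mul_pow (1 - 1 / (k : ℝ))]; ring
      _ ≤ _ := by exact_mod_cast sum_card_walks_le hk ω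
  rw [lt_div_iff₀ (by positivity)]
  have hlt := mul_lt_mul_of_pos_right (compound_error k hk)
    (by positivity : (0 : ℝ) < 2 * r * n * M)
  calc _ ≤ (((k : ℝ) - 1) * n) * ((1 + 1 / k) ^ (k - 1) * M) * (2 * r) := by gcongr
    _ = ((k : ℝ) - 1) * (1 + 1 / k) ^ (k - 1) * (2 * r * n * M) := by ring
    _ < 8 * k ^ 2 * (1 - 1 / k) ^ (k - 1) * (2 * r * n * M) := hlt
    _ = (N : ℝ) * ((1 - 1 / k) ^ (k - 1) * M) := by rw [hNr]; ring
    _ ≤ _ := hlow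

/-- For `ε = 1 / k`, `N = 16 k² r n` and `p² = log n / n` the exponential equals `n ^ (-4 r)`, which
is at most `n ^ (-3)` and so beats the `O(n ^ 2)` terms of the union bound. -/
lemma failure_bound {k r n : ℕ} (hk : 3 ≤ k) (hr : 2 ≤ r) (hn : 2 ≤ n) :
    4 * (k : ℝ) * ((16 * k ^ 2 * r * n : ℕ) : ℝ) ^ 2 *
        Real.exp (-((1 / (k : ℝ)) ^ 2 *
          (((16 * k ^ 2 * r * n : ℕ) : ℝ) * Real.sqrt (Real.log n / n) ^ 2) / 4)) ≤
      4 * k * (16 * k ^ 2 * r) ^ 2 * (1 / (n : ℝ)) := by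
  have hk0 : (0 : ℝ) < k := by exact_mod_cast (by omega : 0 < k)
  have hn0 : (0 : ℝ) < n := by exact_mod_cast (by omega : 0 < n)
  have hn1 : (1 : ℝ) ≤ n := by exact_mod_cast (by omega : 1 ≤ n)
  have hr2 : (2 : ℝ) ≤ r := by exact_mod_cast hr
  have hlog : 0 ≤ Real.log n := Real.log_nonneg hn1
  have hexp : Real.exp (-((1 / (k : ℝ)) ^ 2 *
      (((16 * k ^ 2 * r * n : ℕ) : ℝ) * Real.sqrt (Real.log n / n) ^ 2) / 4)) ≤
      1 / (n : ℝ) ^ 3 := by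
    rw [Real.sq_sqrt (by positivity)]
    have h1 : (1 / (k : ℝ)) ^ 2 * (((16 * k ^ 2 * r * n : ℕ) : ℝ) * (Real.log n / n)) / 4 =
        4 * r * Real.log n := by
      push_cast
      field_simp
      ring
    have h2 : 1 / (n : ℝ) ^ 3 = Real.exp (-(3 * Real.log n)) := by
      rw [Real.exp_neg, mul_comm, Real.exp_mul, Real.exp_log hn0]
      norm_num
    rw [h1, h2, Real.exp_le_exp]
    nlinarith
  calc _ ≤ 4 * (k : ℝ) * ((16 * k ^ 2 * r * n : ℕ) : ℝ) ^ 2 * (1 / (n : ℝ) ^ 3) := by gcongr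
    _ = _ := by push_cast; field_simp

/-- For fixed `k ≥ 3` and `r ≥ 2`, with `c = 16k²r` and `p = √(log n / n)`, the probability
that every set `C ⊆ V(G)` with `|C| ≤ (k-1)n` satisfies `z_C < t_k / (2r)` in `G(k, cn, p)`
tends to `1` as `n → ∞`. -/
theorem prob_zC_small (k r : ℕ) (hk : 3 ≤ k) (hr : 2 ≤ r) :
    Filter.Tendsto
      (fun n : ℕ =>
        edgeMeasure k (16 * k ^ 2 * r * n) (Real.sqrt (Real.log n / n))
          {ω | ∀ C : Finset (Fin k × Fin (16 * k ^ 2 * r * n)), C.card ≤ (k - 1) * n →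
            (zCount k (randGraph k (16 * k ^ 2 * r * n) ω)
                (randPart k (16 * k ^ 2 * r * n)) C : ℝ)
              < (tkCount k (randGraph k (16 * k ^ 2 * r * n) ω)
                  (randPart k (16 * k ^ 2 * r * n)) : ℝ) / (2 * r)})
      Filter.atTop (nhds 1) := by
  have hk0 : (0 : ℝ) < k := by exact_mod_cast (by omega : 0 < k)
  have hε1 : 1 / (k : ℝ) ≤ 1 := by
    rw [div_le_one hk0]
    exact_mod_cast (by omega : 1 ≤ k)
  have hlim : Filter.Tendsto (fun n : ℕ =>
      ENNReal.ofReal (1 - 4 * k * (16 * k ^ 2 * r) ^ 2 * (1 / (n : ℝ)))) Filter.atTop (nhds 1) := by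
    have h := (tendsto_one_div_atTop_nhds_zero_nat (𝕜 := ℝ)).const_mul
      (4 * (k : ℝ) * (16 * k ^ 2 * r) ^ 2)
    have h := ENNReal.tendsto_ofReal (h.const_sub 1)
    simpa using h
  have hp : ∀ n : ℕ, 2 ≤ n → 0 < Real.sqrt (Real.log n / n) ∧ Real.sqrt (Real.log n / n) ≤ 1 := by
    intro n hn
    have hn1 : (1 : ℝ) < n := by exact_mod_cast (by omega : 1 < n)
    have hlog := Real.log_pos hn1
    refine ⟨Real.sqrt_pos.2 (by positivity), Real.sqrt_le_one.2 ?_⟩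
    rw [div_le_one (by positivity)]
    exact Real.log_le_self (by positivity)
  refine tendsto_of_tendsto_of_tendsto_of_le_of_le' hlim tendsto_const_nhds ?_ ?_
  · filter_upwards [Filter.eventually_ge_atTop 2] with n hn
    obtain ⟨hp0, hp1⟩ := hp n hn
    have hbad := (measure_not_isDegreeRegular_le hk hp0.le hp1 (by positivity) hε1).trans
      (failure_bound hk hr hn)
    have := isProbabilityMeasure_edgeMeasure k (16 * k ^ 2 * r * n) hp0.le hp1
    generalize hN : 16 * k ^ 2 * r * n = N at *
    generalize Real.sqrt (Real.log n / n) = p at *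
    have hgood : 1 - 4 * k * (16 * k ^ 2 * r) ^ 2 * (1 / (n : ℝ)) ≤
        (edgeMeasure k N p).real {ω | IsDegreeRegular k N hk p (1 / k) ω} := by
      have h := probReal_compl_eq_one_sub (μ := edgeMeasure k N p)
        (s := {ω | ¬ IsDegreeRegular k N hk p (1 / k) ω}) .of_discrete
      rw [show {ω | ¬ IsDegreeRegular k N hk p (1 / k) ω}ᶜ =
        {ω | IsDegreeRegular k N hk p (1 / k) ω} by ext; simp] at h
      linarith
    refine (ENNReal.ofReal_le_ofReal hgood).trans ?_
    rw [measureReal_def, ENNReal.ofReal_toReal (measure_ne_top _ _)]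
    exact measure_mono fun ω hω C hC =>
      zCount_lt_of_isDegreeRegular hk hr (by omega) hN.symm hp0 hω C hC
  · filter_upwards [Filter.eventually_ge_atTop 2] with n hn
    obtain ⟨hp0, hp1⟩ := hp n hn
    have := isProbabilityMeasure_edgeMeasure k (16 * k ^ 2 * r * n) hp0.le hp1
    exact prob_le_one
end
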